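/- arXiv:1902.03719 — 3 statements merged into one kernel-verified Lean document; each statement's English description precedes it below -/
import Mathlib

section
/- Let f be a homogeneous polynomial of degree d ≥ 2 in n ≥ 2 variables and let w ∈ ℝⁿ be a point with f(w) > 0. Then the following are equivalent: (1) the Hessian of f^{1/d} at w is negative semidefinite; (2) the Hessian of log f at w is negative semidefinite; (3) the Hessian of f at w has exactly one positive eigenvalue. -/
open MvPolynomial Matrix

noncomputable def polyHessian {n : ℕ} (f : MvPolynomial (Fin n) ℝ) (w : Fin n → ℝ) :
    Matrix (Fin n) (Fin n) ℝ :=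
  Matrix.of fun i j => eval w (pderiv i (pderiv j f))

def ExactlyOnePosEig {n : ℕ} (A : Matrix (Fin n) (Fin n) ℝ) : Prop :=
  ∃ hA : A.IsHermitian, (Finset.univ.filter fun i => 0 < hA.eigenvalues i).card = 1

def AtMostOnePosEig {n : ℕ} (A : Matrix (Fin n) (Fin n) ℝ) : Prop :=
  ∃ hA : A.IsHermitian, (Finset.univ.filter fun i => 0 < hA.eigenvalues i).card ≤ 1

def MConvexSet {n : ℕ} (J : Set (Fin n →₀ ℕ)) : Prop :=
  ∀ α ∈ J, ∀ β ∈ J, ∀ i : Fin n, β i < α i →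
    ∃ j : Fin n, α j < β j ∧ α - Finsupp.single i 1 + Finsupp.single j 1 ∈ J

def LorBase {n : ℕ} (d : ℕ) (f : MvPolynomial (Fin n) ℝ) : Prop :=
  f.IsHomogeneous d ∧ (∀ α, 0 ≤ f.coeff α) ∧ MConvexSet {α | f.coeff α ≠ 0}

def IsLorentzian {n : ℕ} : ℕ → MvPolynomial (Fin n) ℝ → Prop
  | 0, f => LorBase 0 f
  | 1, f => LorBase 1 f
  | 2, f => LorBase 2 f ∧ AtMostOnePosEig (polyHessian f 0)
  | d + 3, f => LorBase (d + 3) f ∧ ∀ i, IsLorentzian (d + 2) (pderiv i f)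

noncomputable def funHessian {n : ℕ} (g : (Fin n → ℝ) → ℝ) (w : Fin n → ℝ) :
    Matrix (Fin n) (Fin n) ℝ :=
  Matrix.of fun i j => iteratedFDeriv ℝ 2 g w ![Pi.single i 1, Pi.single j 1]

theorem pderiv_pderiv_comm {σ R : Type*} [CommRing R] (i j : σ) (f : MvPolynomial σ R) :
    pderiv i (pderiv j f) = pderiv j (pderiv i f) := by
  classical
  have h : ⁅pderiv (R := R) i, pderiv (R := R) j⁆ = 0 := by
    apply MvPolynomial.derivation_ext
    intro k
    rw [Derivation.commutator_apply, pderiv_X, pderiv_X]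
    simp [Pi.single_apply, apply_ite]
  have h' := congrArg (fun D : Derivation R (MvPolynomial σ R) (MvPolynomial σ R) => D f) h
  rw [Derivation.commutator_apply] at h'
  exact sub_eq_zero.mp h'

theorem hasFDerivAt_mvPolynomial_eval {σ : Type*} [Fintype σ] (f : MvPolynomial σ ℝ) (x : σ → ℝ) :
    HasFDerivAt (fun y => eval y f)
      (∑ i, eval x (pderiv i f) • (ContinuousLinearMap.proj i : (σ → ℝ) →L[ℝ] ℝ)) x := by
  classical
  induction f using MvPolynomial.induction_on with
  | C a => simpa using hasFDerivAt_const a x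
  | add p q hp hq =>
    simpa [add_smul, Finset.sum_add_distrib] using! hp.add hq
  | mul_X p k hp =>
    have h := hp.mul (hasFDerivAt_apply k x)
    simp only [map_mul, eval_X]
    refine h.congr_fderiv ?_
    ext v
    simp [pderiv_X, Pi.single_apply, Finset.mul_sum, Finset.sum_add_distrib, mul_add, apply_ite,
      mul_comm, mul_left_comm]

theorem funHessian_comp_eval {n : ℕ} (f : MvPolynomial (Fin n) ℝ) (w : Fin n → ℝ)
    {φ φ' : ℝ → ℝ} {c : ℝ} (h₁ : ∀ᶠ y in nhds (eval w f), HasDerivAt φ (φ' y) y)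
    (h₂ : HasDerivAt φ' c (eval w f)) :
    funHessian (fun x => φ (eval x f)) w =
      φ' (eval w f) • polyHessian f w +
        c • vecMulVec (fun i => eval w (pderiv i f)) (fun i => eval w (pderiv i f)) := by
  have hcont : ContinuousAt (fun y => eval y f) w :=
    (hasFDerivAt_mvPolynomial_eval f w).continuousAt
  have hfd : fderiv ℝ (fun x => φ (eval x f)) =ᶠ[nhds w] fun x =>
      φ' (eval x f) •
        ∑ i, eval x (pderiv i f) • (ContinuousLinearMap.proj i : (Fin n → ℝ) →L[ℝ] ℝ) := by
    filter_upwards [hcont.eventually h₁] with x hx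
    exact (hx.comp_hasFDerivAt x (hasFDerivAt_mvPolynomial_eval f x)).fderiv
  have h₃ := (h₂.comp_hasFDerivAt w (hasFDerivAt_mvPolynomial_eval f w)).smul
    (HasFDerivAt.fun_sum (u := Finset.univ) fun i _ =>
      (hasFDerivAt_mvPolynomial_eval (pderiv i f) w).smul_const
        (ContinuousLinearMap.proj i : (Fin n → ℝ) →L[ℝ] ℝ))
  ext i j
  rw [funHessian, of_apply, iteratedFDeriv_two_apply, hfd.fderiv_eq]
  erw [h₃.fderiv]
  simp [polyHessian, vecMulVec_apply, Pi.single_apply]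
  ring

theorem polyHessian_isHermitian {n : ℕ} (f : MvPolynomial (Fin n) ℝ) (w : Fin n → ℝ) :
    (polyHessian f w).IsHermitian := by
  ext i j
  simp [polyHessian, pderiv_pderiv_comm i j]

theorem dotProduct_gradient_of_isHomogeneous {n d : ℕ} {f : MvPolynomial (Fin n) ℝ}
    (hf : f.IsHomogeneous d) (w : Fin n → ℝ) :
    (fun i => eval w (pderiv i f)) ⬝ᵥ w = d * eval w f := by
  have h := congrArg (eval w) hf.sum_X_mul_pderiv
  simpa [dotProduct, mul_comm] using h

theorem polyHessian_mulVec_of_isHomogeneous {n d : ℕ} {f : MvPolynomial (Fin n) ℝ}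
    (hf : f.IsHomogeneous d) (w : Fin n → ℝ) :
    polyHessian f w *ᵥ w = ((d - 1 : ℕ) : ℝ) • fun i => eval w (pderiv i f) := by
  ext i
  have h := dotProduct_gradient_of_isHomogeneous (hf.pderiv (i := i)) w
  simpa [polyHessian, mulVec, dotProduct, pderiv_pderiv_comm i] using h

namespace Matrix.IsHermitian

variable {ι : Type*} [Fintype ι] {A : Matrix ι ι ℝ}

theorem eigenvectorBasis_dotProduct [DecidableEq ι] (hA : A.IsHermitian) (i j : ι) :
    (⇑(hA.eigenvectorBasis i) : ι → ℝ) ⬝ᵥ ⇑(hA.eigenvectorBasis j) =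
      if i = j then 1 else 0 := by
  have h := orthonormal_iff_ite.mp hA.eigenvectorBasis.orthonormal i j
  rw [EuclideanSpace.inner_eq_star_dotProduct] at h
  simpa [dotProduct_comm] using h

theorem dotProduct_mulVec_comm (hA : A.IsHermitian) (x y : ι → ℝ) :
    x ⬝ᵥ A *ᵥ y = y ⬝ᵥ A *ᵥ x := by
  have hT : Aᵀ = A := by simpa using hA.eq
  rw [dotProduct_mulVec, ← mulVec_transpose, hT, dotProduct_comm]

theorem dotProduct_mulVec_eq_sum [DecidableEq ι] (hA : A.IsHermitian) (x : ι → ℝ) :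
    x ⬝ᵥ A *ᵥ x = ∑ i, hA.eigenvalues i * (x ⬝ᵥ ⇑(hA.eigenvectorBasis i)) ^ 2 := by
  have h := hA.eigenvectorBasis.sum_inner_mul_inner (WithLp.toLp 2 x) (WithLp.toLp 2 (A *ᵥ x))
  simp only [EuclideanSpace.inner_eq_star_dotProduct, star_trivial] at h
  rw [dotProduct_comm, ← h]
  refine Finset.sum_congr rfl fun i _ => ?_
  have h₁ : (A *ᵥ x) ⬝ᵥ ⇑(hA.eigenvectorBasis i) =
      hA.eigenvalues i * (x ⬝ᵥ ⇑(hA.eigenvectorBasis i)) := by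
    rw [dotProduct_comm, hA.dotProduct_mulVec_comm, hA.mulVec_eigenvectorBasis, dotProduct_smul,
      smul_eq_mul]
  rw [h₁, dotProduct_comm]
  ring

end Matrix.IsHermitian

theorem ExactlyOnePosEig.dotProduct_mulVec_nonpos {n : ℕ} {A : Matrix (Fin n) (Fin n) ℝ}
    (h : ExactlyOnePosEig A) {w x : Fin n → ℝ} (hw : 0 < w ⬝ᵥ A *ᵥ w) (hx : w ⬝ᵥ A *ᵥ x = 0) :
    x ⬝ᵥ A *ᵥ x ≤ 0 := by
  obtain ⟨hA, hcard⟩ := h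
  obtain ⟨i, hi⟩ := Finset.card_eq_one.mp hcard
  have hneg : ∀ z : Fin n → ℝ, z ⬝ᵥ ⇑(hA.eigenvectorBasis i) = 0 → z ⬝ᵥ A *ᵥ z ≤ 0 := by
    intro z hz
    rw [hA.dotProduct_mulVec_eq_sum]
    refine Finset.sum_nonpos fun j _ => ?_
    by_cases hj : j = i
    · simp [hj, hz]
    · refine mul_nonpos_of_nonpos_of_nonneg (not_lt.mp fun hpos => hj ?_) (sq_nonneg _)
      exact Finset.mem_singleton.mp (hi ▸ Finset.mem_filter.mpr ⟨Finset.mem_univ j, hpos⟩)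
  set v : Fin n → ℝ := ⇑(hA.eigenvectorBasis i)
  have hwv : w ⬝ᵥ v ≠ 0 := fun h => (hneg w h).not_gt hw
  have hz := hneg ((w ⬝ᵥ v) • x - (x ⬝ᵥ v) • w) (by
    simp only [sub_dotProduct, smul_dotProduct, smul_eq_mul]; ring)
  have hx' : x ⬝ᵥ A *ᵥ w = 0 := by rw [hA.dotProduct_mulVec_comm, hx]
  simp only [mulVec_sub, mulVec_smul, sub_dotProduct, dotProduct_sub, smul_dotProduct,
    dotProduct_smul, smul_eq_mul, hx, hx', mul_zero, sub_zero, zero_sub] at hz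
  have hsq : 0 < (w ⬝ᵥ v) ^ 2 := by positivity
  nlinarith [mul_nonneg (sq_nonneg (x ⬝ᵥ v)) hw.le]

theorem exactlyOnePosEig_of_nonpos_on_hyperplane {n : ℕ} {A : Matrix (Fin n) (Fin n) ℝ}
    (hA : A.IsHermitian) {w g : Fin n → ℝ} (hw : 0 < w ⬝ᵥ A *ᵥ w)
    (hg : ∀ x, g ⬝ᵥ x = 0 → x ⬝ᵥ A *ᵥ x ≤ 0) : ExactlyOnePosEig A := by
  refine ⟨hA, le_antisymm (Finset.card_le_one.mpr ?_) (Finset.card_pos.mpr ?_)⟩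
  · intro i hi j hj
    replace hi := (Finset.mem_filter.mp hi).2
    replace hj := (Finset.mem_filter.mp hj).2
    by_contra hij
    have hii := hA.eigenvectorBasis_dotProduct i i
    have hjj := hA.eigenvectorBasis_dotProduct j j
    have hij' := hA.eigenvectorBasis_dotProduct i j
    have hji' := hA.eigenvectorBasis_dotProduct j i
    have hAi := hA.mulVec_eigenvectorBasis i
    have hAj := hA.mulVec_eigenvectorBasis j
    rw [if_pos rfl] at hii hjj
    rw [if_neg hij] at hij'
    rw [if_neg (Ne.symm hij)] at hji'
    set u : Fin n → ℝ := ⇑(hA.eigenvectorBasis i)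
    set v : Fin n → ℝ := ⇑(hA.eigenvectorBasis j)
    have hu : g ⬝ᵥ u ≠ 0 := by
      intro h
      have := hg u h
      rw [hAi, dotProduct_smul, hii, smul_eq_mul, mul_one] at this
      exact this.not_gt hi
    have hz := hg ((g ⬝ᵥ v) • u - (g ⬝ᵥ u) • v) (by
      simp only [dotProduct_sub, dotProduct_smul, smul_eq_mul]; ring)
    simp only [mulVec_sub, mulVec_smul, sub_dotProduct, dotProduct_sub, smul_dotProduct,
      dotProduct_smul, smul_eq_mul, hAi, hAj, hii, hjj, hij', hji'] at hz
    have hsq : 0 < (g ⬝ᵥ u) ^ 2 := by positivity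
    nlinarith [mul_nonneg (sq_nonneg (g ⬝ᵥ v)) hi.le, mul_pos hsq hj]
  · by_contra h
    rw [Finset.not_nonempty_iff_eq_empty, Finset.filter_eq_empty_iff] at h
    rw [hA.dotProduct_mulVec_eq_sum] at hw
    exact hw.not_ge (Finset.sum_nonpos fun i hi =>
      mul_nonpos_of_nonpos_of_nonneg (not_lt.mp (h hi)) (sq_nonneg _))

theorem posSemidef_neg_rank_one_perturbation_iff {n : ℕ} {A : Matrix (Fin n) (Fin n) ℝ}
    (hA : A.IsHermitian) {w g : Fin n → ℝ} {a k e s : ℝ} (ha : 0 < a) (he : 0 < e) (hs : 0 < s)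
    (hAw : A *ᵥ w = e • g) (hgw : g ⬝ᵥ w = s) (hk : a * e ≤ k * s) :
    (-(a • A + (-k) • vecMulVec g g)).PosSemidef ↔ ExactlyOnePosEig A := by
  have hw : w ⬝ᵥ A *ᵥ w = e * s := by
    rw [hAw, dotProduct_smul, dotProduct_comm, hgw, smul_eq_mul]
  have hwpos : 0 < w ⬝ᵥ A *ᵥ w := hw ▸ mul_pos he hs
  have hquad (x : Fin n → ℝ) : x ⬝ᵥ (-(a • A + (-k) • vecMulVec g g)) *ᵥ x =
      k * (g ⬝ᵥ x) ^ 2 - a * (x ⬝ᵥ A *ᵥ x) := by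
    simp only [neg_mulVec, add_mulVec, smul_mulVec, vecMulVec_mulVec, dotProduct_neg,
      dotProduct_add, dotProduct_smul, smul_eq_mul, op_smul_eq_smul, dotProduct_comm x g]
    ring
  constructor
  · intro h
    refine exactlyOnePosEig_of_nonpos_on_hyperplane hA hwpos (g := g) fun x hx => ?_
    have := h.dotProduct_mulVec_nonneg x
    rw [star_trivial, hquad, hx] at this
    nlinarith
  · intro h
    refine .of_dotProduct_mulVec_nonneg ?_ fun x => ?_
    · have hgg : (vecMulVec g g).IsHermitian := by
        ext i j
        simp [vecMulVec_apply, mul_comm]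
      have hAT := hA.eq
      have hggT := hgg.eq
      rw [IsHermitian, conjTranspose_neg, conjTranspose_add, conjTranspose_smul,
        conjTranspose_smul, hAT, hggT, star_trivial, star_trivial]
    · rw [star_trivial, hquad]
      have hwx : w ⬝ᵥ A *ᵥ x = e * (g ⬝ᵥ x) := by
        rw [hA.dotProduct_mulVec_comm, hAw, dotProduct_smul, dotProduct_comm, smul_eq_mul]
      have hxw : x ⬝ᵥ A *ᵥ w = e * (g ⬝ᵥ x) := by rw [hA.dotProduct_mulVec_comm, hwx]
      have hz := h.dotProduct_mulVec_nonpos (x := s • x - (g ⬝ᵥ x) • w) hwpos (by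
        simp only [mulVec_sub, mulVec_smul, dotProduct_sub, dotProduct_smul, smul_eq_mul, hwx, hw]
        ring)
      simp only [mulVec_sub, mulVec_smul, sub_dotProduct, dotProduct_sub, smul_dotProduct,
        dotProduct_smul, smul_eq_mul, hwx, hxw, hw] at hz
      have hz' : s * (x ⬝ᵥ A *ᵥ x) ≤ e * (g ⬝ᵥ x) ^ 2 := by
        refine le_of_mul_le_mul_left ?_ hs
        linarith
      refine nonneg_of_mul_nonneg_right ?_ hs
      nlinarith [mul_le_mul_of_nonneg_left hz' ha.le,
        mul_le_mul_of_nonneg_right hk (sq_nonneg (g ⬝ᵥ x))]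

theorem stmt4 {n d : ℕ} (hn : 2 ≤ n) (hd : 2 ≤ d) (f : MvPolynomial (Fin n) ℝ)
    (hf : f.IsHomogeneous d) (w : Fin n → ℝ) (hw : 0 < eval w f) :
    ((-(funHessian (fun x => eval x f ^ ((d : ℝ)⁻¹)) w)).PosSemidef ↔
        ExactlyOnePosEig (polyHessian f w)) ∧
    ((-(funHessian (fun x => Real.log (eval x f)) w)).PosSemidef ↔
        ExactlyOnePosEig (polyHessian f w)) := by
  have hd0 : (0 : ℝ) < d := by positivity
  have he : (0 : ℝ) < ((d - 1 : ℕ) : ℝ) := by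
    have : 0 < d - 1 := by omega
    exact_mod_cast this
  have he' : ((d - 1 : ℕ) : ℝ) = d - 1 := by
    rw [Nat.cast_sub (by omega), Nat.cast_one]
  have key {a k : ℝ} (ha : 0 < a) (hk : a * ((d - 1 : ℕ) : ℝ) ≤ k * (d * eval w f)) :=
    posSemidef_neg_rank_one_perturbation_iff (polyHessian_isHermitian f w) ha he
      (mul_pos hd0 hw) (polyHessian_mulVec_of_isHomogeneous hf w)
      (dotProduct_gradient_of_isHomogeneous hf w) hk
  constructor
  · have h₂ := (Real.hasDerivAt_rpow_const (x := eval w f) (p := (d : ℝ)⁻¹ - 1)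
      (Or.inl hw.ne')).const_mul (d : ℝ)⁻¹
    rw [funHessian_comp_eval f w (φ := fun y => y ^ ((d : ℝ)⁻¹))
      ((eventually_ne_nhds hw.ne').mono fun y hy => Real.hasDerivAt_rpow_const (Or.inl hy)) h₂,
      ← neg_neg ((d : ℝ)⁻¹ * (((d : ℝ)⁻¹ - 1) * _))]
    refine key (by positivity) (le_of_eq ?_)
    rw [Real.rpow_sub_one hw.ne' ((d : ℝ)⁻¹ - 1), he']
    field_simp
    ring
  · rw [funHessian_comp_eval f w (φ := Real.log)
      ((eventually_ne_nhds hw.ne').mono fun y hy => Real.hasDerivAt_log hy)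
      (hasDerivAt_inv hw.ne')]
    refine key (by positivity) ?_
    rw [he']
    field_simp
    linarith
end

section
/- If f is a Lorentzian polynomial of degree d, then for any v₁ ∈ ℝⁿ and v₂,…,v_d in the nonnegative orthant, F_f(v₁,v₂,v₃,…,v_d)² ≥ F_f(v₁,v₁,v₃,…,v_d)·F_f(v₂,v₂,v₃,…,v_d), where F_f is the complete polarization (symmetric multilinear form) of f. -/
open MvPolynomial Matrix

noncomputable def polarForm {n : ℕ} (d : ℕ) (f : MvPolynomial (Fin n) ℝ)
    (v : Fin d → Fin n → ℝ) : ℝ :=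
  ((d.factorial : ℝ))⁻¹ *
    iteratedFDeriv ℝ d (fun x : Fin d → ℝ => eval (fun j => ∑ i, x i * v i j) f) 0
      (fun i => Pi.single i 1)

open Finset in
theorem Matrix.IsHermitian.dotProduct_mulVec_eq_sum_s7 {n : ℕ} {B : Matrix (Fin n) (Fin n) ℝ}
    (hB : B.IsHermitian) (y : Fin n → ℝ) :
    y ⬝ᵥ B *ᵥ y = ∑ k, hB.eigenvalues k * ((hB.eigenvectorBasis k).ofLp ⬝ᵥ y) ^ 2 := by
  have h := hB.eigenvectorBasis.sum_inner_mul_inner (WithLp.toLp 2 y) (WithLp.toLp 2 (B *ᵥ y))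
  simp only [EuclideanSpace.inner_eq_star_dotProduct, star_trivial] at h
  rw [dotProduct_comm, ← h]
  refine sum_congr rfl fun k _ => ?_
  have hs : B *ᵥ y ⬝ᵥ (hB.eigenvectorBasis k).ofLp =
      hB.eigenvalues k * ((hB.eigenvectorBasis k).ofLp ⬝ᵥ y) := by
    have hT : Bᵀ = B := by simpa using hB.eq
    rw [dotProduct_comm, dotProduct_mulVec, ← mulVec_transpose, hT, hB.mulVec_eigenvectorBasis,
      smul_dotProduct, smul_eq_mul]
  rw [hs]
  ring

theorem AtMostOnePosEig.exists_nonpos {n : ℕ} {A : Matrix (Fin n) (Fin n) ℝ}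
    (h : AtMostOnePosEig A) :
    ∃ a : Fin n → ℝ, ∀ t, a ⬝ᵥ t = 0 → t ⬝ᵥ A *ᵥ t ≤ 0 := by
  obtain ⟨hA, hc⟩ := h
  by_cases hn : Nonempty (Fin n)
  · obtain ⟨k, hk⟩ := Finset.card_le_one_iff_subset_singleton.1 hc
    refine ⟨(hA.eigenvectorBasis k).ofLp, fun t ht => ?_⟩
    rw [hA.dotProduct_mulVec_eq_sum_s7]
    refine Finset.sum_nonpos fun j _ => ?_
    by_cases hj : j = k
    · subst hj; simp [ht]
    · have : ¬ 0 < hA.eigenvalues j := fun hp => hj (by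
        simpa using hk (Finset.mem_filter.2 ⟨Finset.mem_univ j, hp⟩))
      exact mul_nonpos_of_nonpos_of_nonneg (not_lt.1 this) (sq_nonneg _)
  · rw [not_nonempty_iff] at hn
    exact ⟨0, fun t _ => by simp [dotProduct]⟩

theorem Matrix.IsSymm.dotProduct_mulVec_comm {n : ℕ} {A : Matrix (Fin n) (Fin n) ℝ}
    (hA : A.IsSymm) (x y : Fin n → ℝ) : x ⬝ᵥ A *ᵥ y = y ⬝ᵥ A *ᵥ x := by
  rw [dotProduct_mulVec, ← mulVec_transpose, hA.eq, dotProduct_comm]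

theorem Matrix.IsSymm.reverse_cauchy_schwarz {n : ℕ} {A : Matrix (Fin n) (Fin n) ℝ}
    (hA : A.IsSymm) {a : Fin n → ℝ} (ha : ∀ t, a ⬝ᵥ t = 0 → t ⬝ᵥ A *ᵥ t ≤ 0)
    (x : Fin n → ℝ) {y : Fin n → ℝ} (hy : 0 ≤ y ⬝ᵥ A *ᵥ y) :
    (x ⬝ᵥ A *ᵥ x) * (y ⬝ᵥ A *ᵥ y) ≤ (x ⬝ᵥ A *ᵥ y) ^ 2 := by
  rcases hy.eq_or_lt with hy | hy
  · rw [← hy, mul_zero]; positivity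
  have hb : a ⬝ᵥ y ≠ 0 := fun h => absurd (ha y h) (not_le.2 hy)
  have h := ha ((a ⬝ᵥ y) • x - (a ⬝ᵥ x) • y) (by
    simp only [dotProduct_sub, dotProduct_smul, smul_eq_mul]; ring)
  simp only [mulVec_sub, mulVec_smul, dotProduct_sub, sub_dotProduct, dotProduct_smul,
    smul_dotProduct, smul_eq_mul, hA.dotProduct_mulVec_comm y x] at h
  have hb2 : 0 < (a ⬝ᵥ y) ^ 2 := by positivity
  refine le_of_mul_le_mul_left ?_ hb2
  nlinarith [sq_nonneg ((a ⬝ᵥ x) * (y ⬝ᵥ A *ᵥ y) - (a ⬝ᵥ y) * (x ⬝ᵥ A *ᵥ y)),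
    mul_le_mul_of_nonneg_left h hy.le]

theorem sum_mul_sq_div_sub_dotProduct_mulVec {n : ℕ} {A : Matrix (Fin n) (Fin n) ℝ}
    (hA : A.IsSymm) {w : Fin n → ℝ} (hw : ∀ i, 0 < w i) (x : Fin n → ℝ) :
    ∑ i, ∑ j, A i j * w i * w j * (x i / w i - x j / w j) ^ 2 =
      2 * (∑ i, (A *ᵥ w) i / w i * x i ^ 2 - x ⬝ᵥ A *ᵥ x) := by
  have h1 : ∀ i j, A i j * w i * w j * (x i / w i - x j / w j) ^ 2 =
      A i j * w j / w i * x i ^ 2 + A j i * w i / w j * x j ^ 2 - 2 * (x i * (A i j * x j)) := by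
    intro i j
    have := hw i; have := hw j
    rw [hA.apply i j]
    field_simp
    ring
  have h2 : ∀ i, (A *ᵥ w) i / w i * x i ^ 2 = ∑ j, A i j * w j / w i * x i ^ 2 := by
    intro i
    simp only [mulVec, dotProduct, Finset.sum_div, Finset.sum_mul]
  simp_rw [h1, h2, Finset.sum_sub_distrib, Finset.sum_add_distrib]
  rw [Finset.sum_comm (f := fun i j => A j i * w i / w j * x j ^ 2)]
  simp only [mulVec, dotProduct, Finset.mul_sum]
  simp only [← Finset.mul_sum]
  ring

theorem nonpos_of_bochner {n : ℕ} {A : Matrix (Fin n) (Fin n) ℝ} (hA : A.IsSymm)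
    (hA0 : ∀ i j, 0 ≤ A i j) {w : Fin n → ℝ} (hw : ∀ i, 0 < w i)
    (hconn : ∀ y : Fin n → ℝ, (∀ i j, A i j ≠ 0 → y i = y j) →
      ∀ i j k l, A i k ≠ 0 → A j l ≠ 0 → y i = y j)
    (hB : ∀ x, x ⬝ᵥ A *ᵥ x ≤ ∑ i, w i / (A *ᵥ w) i * (A *ᵥ x) i ^ 2)
    (x : Fin n → ℝ) (hx : (A *ᵥ w) ⬝ᵥ x = 0) : x ⬝ᵥ A *ᵥ x ≤ 0 := by
  set c := A *ᵥ w with hc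
  have hci : ∀ i, c i = ∑ j, A i j * w j := fun _ => rfl
  have hc0 : ∀ i, 0 ≤ c i := fun i => (hci i).symm ▸
    Finset.sum_nonneg fun j _ => mul_nonneg (hA0 i j) (hw j).le
  have hcA : ∀ i, c i = 0 → ∀ j, A i j = 0 := by
    intro i hi j
    rw [hci] at hi
    have := (Finset.sum_eq_zero_iff_of_nonneg
      (fun j _ => mul_nonneg (hA0 i j) (hw j).le)).1 hi j (Finset.mem_univ j)
    exact (mul_eq_zero.1 this).resolve_right (hw j).ne'
  set s : Fin n → ℝ := fun i => Real.sqrt (w i / c i)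
  have hs2 : ∀ i, s i ^ 2 = w i / c i := fun i => Real.sq_sqrt (div_nonneg (hw i).le (hc0 i))
  set B : Matrix (Fin n) (Fin n) ℝ := Matrix.of fun i j => s i * A i j * s j with hBdef
  have hBmul : ∀ u i, (B *ᵥ u) i = s i * (A *ᵥ (s * u)) i := by
    intro u i
    simp only [mulVec, dotProduct, Finset.mul_sum, hBdef, of_apply, Pi.mul_apply]
    exact Finset.sum_congr rfl fun j _ => by ring
  have hBquad : ∀ u, u ⬝ᵥ B *ᵥ u = (s * u) ⬝ᵥ A *ᵥ (s * u) := by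
    intro u
    simp only [dotProduct, hBmul, Pi.mul_apply]
    exact Finset.sum_congr rfl fun j _ => by ring
  have hBh : B.IsHermitian := by
    ext i j
    simp only [conjTranspose_apply, hBdef, of_apply, star_trivial]
    rw [hA.apply]; ring
  set y : Fin n → ℝ := fun i => x i / s i with hy
  have hAx : ∀ i j, A i j * (s j * y j) = A i j * x j := by
    intro i j
    by_cases h : c j = 0
    · rw [← hA.apply, hcA j h i]; simp
    · have : s j ≠ 0 := by
        rw [← pow_ne_zero_iff two_ne_zero, hs2]
        exact div_ne_zero (hw j).ne' h
      simp only [hy]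
      field_simp
  have hxy : x ⬝ᵥ A *ᵥ x = y ⬝ᵥ B *ᵥ y := by
    rw [hBquad]
    have h1 : A *ᵥ (s * y) = A *ᵥ x := by
      ext i; simp only [mulVec, dotProduct, Pi.mul_apply, hAx]
    rw [h1, hA.dotProduct_mulVec_comm (s * y) x, h1]
  rw [hxy, hBh.dotProduct_mulVec_eq_sum_s7]
  refine Finset.sum_nonpos fun k _ => ?_
  set u := (hBh.eigenvectorBasis k).ofLp with hu
  set l := hBh.eigenvalues k with hl
  have hBu : B *ᵥ u = l • u := hBh.mulVec_eigenvectorBasis k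
  have huu : u ⬝ᵥ u = 1 := by
    have := real_inner_self_eq_norm_sq (hBh.eigenvectorBasis k)
    rwa [hBh.eigenvectorBasis.orthonormal.1 k, one_pow,
      EuclideanSpace.inner_eq_star_dotProduct, star_trivial] at this
  have hq : (s * u) ⬝ᵥ A *ᵥ (s * u) = l := by
    rw [← hBquad, hBu, dotProduct_smul, huu, smul_eq_mul, mul_one]
  have hui : ∀ i, s i * (A *ᵥ (s * u)) i = l * u i := by
    intro i; rw [← hBmul, hBu]; simp
  have hl2 : l ≤ l ^ 2 := by
    have h := hB (s * u)
    rw [hq] at h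
    refine h.trans_eq ?_
    have : ∀ i, w i / c i * (A *ᵥ (s * u)) i ^ 2 = l ^ 2 * (u i * u i) := by
      intro i; rw [← hs2, ← mul_pow, hui]; ring
    simp_rw [this]
    rw [← Finset.mul_sum]
    change l ^ 2 * (u ⬝ᵥ u) = _
    rw [huu, mul_one]
  have hsum := sum_mul_sq_div_sub_dotProduct_mulVec hA hw (s * u)
  rw [hq, ← hc] at hsum
  have hterm : ∀ i j, 0 ≤ A i j * w i * w j * ((s * u) i / w i - (s * u) j / w j) ^ 2 :=
    fun i j => mul_nonneg (mul_nonneg (mul_nonneg (hA0 i j) (hw i).le) (hw j).le) (sq_nonneg _)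
  have hone : ∑ i, c i / w i * (s * u) i ^ 2 ≤ 1 := by
    rw [← huu]
    refine Finset.sum_le_sum fun i _ => ?_
    rw [Pi.mul_apply, mul_pow, hs2]
    by_cases h : c i = 0
    · simp only [h, zero_div, zero_mul]; exact mul_self_nonneg _
    · have := hw i
      apply le_of_eq; field_simp
  rcases le_or_gt l 0 with hl0 | hl0
  · exact mul_nonpos_of_nonpos_of_nonneg hl0 (sq_nonneg _)
  have hl1 : 1 ≤ l := by nlinarith
  have hzero : ∑ i, ∑ j, A i j * w i * w j * ((s * u) i / w i - (s * u) j / w j) ^ 2 = 0 :=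
    le_antisymm (by rw [hsum]; linarith)
      (Finset.sum_nonneg fun i _ => Finset.sum_nonneg fun j _ => hterm i j)
  have hl_one : l = 1 := by
    rw [hzero] at hsum; linarith
  have hedge : ∀ i j, A i j ≠ 0 → (s * u) i / w i = (s * u) j / w j := by
    intro i j hij
    have h1 := (Finset.sum_eq_zero_iff_of_nonneg
      (fun i _ => Finset.sum_nonneg fun j _ => hterm i j)).1 hzero i (Finset.mem_univ i)
    have h2 := (Finset.sum_eq_zero_iff_of_nonneg (fun j _ => hterm i j)).1 h1 j (Finset.mem_univ j)
    have h3 := (mul_eq_zero.1 h2).resolve_left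
      (mul_ne_zero (mul_ne_zero hij (hw i).ne') (hw j).ne')
    exact sub_eq_zero.1 (pow_eq_zero_iff two_ne_zero |>.1 h3)
  have hall := hconn (fun i => (s * u) i / w i) hedge
  have hκ : ∃ κ : ℝ, ∀ i j, A i j ≠ 0 → (s * u) j = κ * w j := by
    by_cases h : ∃ i j, A i j ≠ 0
    · obtain ⟨a, b, hab⟩ := h
      refine ⟨(s * u) a / w a, fun i j hij => ?_⟩
      have h := hall a j b i hab (by rwa [hA.apply])
      simp only at h
      rw [h, div_mul_cancel₀ _ (hw j).ne']
    · exact ⟨0, fun i j hij => absurd ⟨i, j, hij⟩ h⟩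
  obtain ⟨κ, hκ⟩ := hκ
  have hAsu : ∀ i, (A *ᵥ (s * u)) i = κ * c i := by
    intro i
    simp only [hc, mulVec, dotProduct, Finset.mul_sum]
    refine Finset.sum_congr rfl fun j _ => ?_
    by_cases h : A i j = 0
    · simp [h]
    · rw [hκ i j h]; ring
  have huy : u ⬝ᵥ y = 0 := by
    have : u ⬝ᵥ y = κ * (c ⬝ᵥ x) := by
      simp only [dotProduct, Finset.mul_sum]
      refine Finset.sum_congr rfl fun i _ => ?_
      have h := hui i
      rw [hl_one, one_mul, hAsu] at h
      rw [← h]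
      by_cases hi : c i = 0
      · simp [hi]
      · have : s i ≠ 0 := by
          rw [← pow_ne_zero_iff two_ne_zero, hs2]
          exact div_ne_zero (hw i).ne' hi
        simp only [hy]
        field_simp
    rw [this, hx, mul_zero]
  rw [huy]; simp

theorem MvPolynomial.pderiv_comm {n : ℕ} (i j : Fin n) (p : MvPolynomial (Fin n) ℝ) :
    pderiv i (pderiv j p) = pderiv j (pderiv i p) := by
  ext m
  simp only [coeff_pderiv]
  by_cases h : i = j
  · rw [h]
  · simp [h, Ne.symm h, add_right_comm m]
    ring

/-- The derivative of a polynomial in the constant direction `v`. -/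
noncomputable def dirDeriv {n : ℕ} (v : Fin n → ℝ) :
    MvPolynomial (Fin n) ℝ →ₗ[ℝ] MvPolynomial (Fin n) ℝ :=
  ∑ i, v i • (pderiv i : Derivation ℝ (MvPolynomial (Fin n) ℝ) _).toLinearMap

theorem dirDeriv_apply {n : ℕ} (v : Fin n → ℝ) (p : MvPolynomial (Fin n) ℝ) :
    dirDeriv v p = ∑ i, v i • pderiv i p := by
  simp [dirDeriv, LinearMap.sum_apply]

theorem dirDeriv_comm {n : ℕ} (v w : Fin n → ℝ) (p : MvPolynomial (Fin n) ℝ) :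
    dirDeriv v (dirDeriv w p) = dirDeriv w (dirDeriv v p) := by
  simp only [dirDeriv_apply, map_sum, Derivation.map_smul]
  rw [Finset.sum_comm]
  refine Finset.sum_congr rfl fun i _ => Finset.sum_congr rfl fun j _ => ?_
  rw [pderiv_comm, smul_comm]

/-- The iterated derivative of a polynomial along a list of constant directions. -/
noncomputable def mixedDeriv {n : ℕ} :
    List (Fin n → ℝ) → MvPolynomial (Fin n) ℝ →ₗ[ℝ] MvPolynomial (Fin n) ℝ
  | [] => LinearMap.id
  | v :: l => mixedDeriv l ∘ₗ dirDeriv v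

@[simp] theorem mixedDeriv_nil {n : ℕ} (p : MvPolynomial (Fin n) ℝ) : mixedDeriv [] p = p := rfl

@[simp] theorem mixedDeriv_cons {n : ℕ} (v : Fin n → ℝ) (l : List (Fin n → ℝ))
    (p : MvPolynomial (Fin n) ℝ) : mixedDeriv (v :: l) p = mixedDeriv l (dirDeriv v p) := rfl

theorem mixedDeriv_dirDeriv {n : ℕ} (l : List (Fin n → ℝ)) (w : Fin n → ℝ)
    (p : MvPolynomial (Fin n) ℝ) : mixedDeriv l (dirDeriv w p) = dirDeriv w (mixedDeriv l p) := by
  induction l generalizing p with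
  | nil => rfl
  | cons v l ih => rw [mixedDeriv_cons, mixedDeriv_cons, dirDeriv_comm, ih]

theorem coeff_dirDeriv {n : ℕ} (v : Fin n → ℝ) (p : MvPolynomial (Fin n) ℝ) (m : Fin n →₀ ℕ) :
    coeff m (dirDeriv v p) = ∑ i, v i * (coeff (m + Finsupp.single i 1) p * (m i + 1)) := by
  simp [dirDeriv_apply, coeff_sum, coeff_pderiv]

theorem coeff_mixedDeriv_nonneg {n : ℕ} {l : List (Fin n → ℝ)} (hl : ∀ v ∈ l, ∀ j, 0 ≤ v j)
    {p : MvPolynomial (Fin n) ℝ} (hp : ∀ m, 0 ≤ coeff m p) (m : Fin n →₀ ℕ) :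
    0 ≤ coeff m (mixedDeriv l p) := by
  induction l generalizing p with
  | nil => exact hp m
  | cons v l ih =>
    refine ih (fun u hu => hl u (List.mem_cons_of_mem _ hu)) fun m => ?_
    rw [coeff_dirDeriv]
    exact Finset.sum_nonneg fun i _ => mul_nonneg (hl v List.mem_cons_self i)
      (mul_nonneg (hp _) (by positivity))

theorem coeff_mixedDeriv_pos {n : ℕ} {l : List (Fin n → ℝ)} (hl : ∀ v ∈ l, ∀ j, 0 < v j)
    {p : MvPolynomial (Fin n) ℝ} (hp : ∀ m, 0 ≤ coeff m p) {α β : Fin n →₀ ℕ}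
    (hα : 0 < coeff α p) (hβ : β ≤ α) (hdeg : α.degree = β.degree + l.length) :
    0 < coeff β (mixedDeriv l p) := by
  induction l generalizing p α with
  | nil =>
    have : α = β := by
      obtain ⟨γ, rfl⟩ := exists_add_of_le hβ
      have : γ = 0 := (Finsupp.degree_eq_zero_iff γ).1 (by simpa using hdeg)
      simp [this]
    simpa [this] using hα
  | cons v l ih =>
    obtain ⟨γ, rfl⟩ := exists_add_of_le hβ
    have hγ : γ ≠ 0 := by rintro rfl; simp at hdeg
    obtain ⟨i, hi⟩ := Finsupp.ne_iff.1 hγ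
    have hle : Finsupp.single i 1 ≤ γ := by
      simpa [Nat.one_le_iff_ne_zero] using hi
    obtain ⟨δ, rfl⟩ := exists_add_of_le hle
    have hv : ∀ j, 0 < v j := hl v List.mem_cons_self
    refine ih (α := β + δ) (fun u hu => hl u (List.mem_cons_of_mem _ hu)) ?_ ?_ le_self_add ?_
    · intro m
      rw [coeff_dirDeriv]
      exact Finset.sum_nonneg fun i _ => mul_nonneg (hv i).le (mul_nonneg (hp _) (by positivity))
    · rw [coeff_dirDeriv]
      refine Finset.sum_pos' (fun j _ => mul_nonneg (hv j).le
        (mul_nonneg (hp _) (by positivity))) ⟨i, Finset.mem_univ i, mul_pos (hv i) (mul_pos ?_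
          (by positivity))⟩
      rwa [add_assoc, add_comm δ]
    · simp only [map_add, Finsupp.degree_single, List.length_cons] at hdeg ⊢
      omega

theorem hasFDerivAt_eval {n : ℕ} (p : MvPolynomial (Fin n) ℝ) (z : Fin n → ℝ) :
    HasFDerivAt (fun z : Fin n → ℝ => eval z p)
      (∑ i, eval z (pderiv i p) • ContinuousLinearMap.proj (R := ℝ) (φ := fun _ : Fin n => ℝ) i)
      z := by
  induction p using MvPolynomial.induction_on with
  | C a => simpa using hasFDerivAt_const a z
  | add p q hp hq =>
    simp only [map_add, add_smul, Finset.sum_add_distrib]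
    exact hp.add hq
  | mul_X p i hp =>
    have h := hp.mul (ContinuousLinearMap.proj (R := ℝ) (φ := fun _ : Fin n => ℝ) i).hasFDerivAt
    simp only [map_mul, eval_X]
    refine h.congr_fderiv ?_
    ext y
    simp [pderiv_X, Pi.single_apply, add_mul, Finset.sum_add_distrib, Finset.mul_sum,
      apply_ite, mul_assoc, Finset.sum_ite_eq]

theorem contDiff_eval {n : ℕ} {k : WithTop ℕ∞} (p : MvPolynomial (Fin n) ℝ) :
    ContDiff ℝ k (fun z : Fin n → ℝ => eval z p) := by
  induction p using MvPolynomial.induction_on with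
  | C a => simpa using contDiff_const
  | add p q hp hq => simpa using hp.add hq
  | mul_X p i hp => simpa using hp.mul (contDiff_apply ℝ ℝ i)

theorem iteratedFDeriv_eval_comp {n d : ℕ} (L : (Fin d → ℝ) →L[ℝ] (Fin n → ℝ))
    (p : MvPolynomial (Fin n) ℝ) (k : ℕ) (x : Fin d → ℝ) (m : Fin k → Fin d → ℝ) :
    iteratedFDeriv ℝ k (fun x => eval (L x) p) x m =
      eval (L x) (mixedDeriv (List.ofFn fun i => L (m i)) p) := by
  induction k generalizing x with
  | zero => simp
  | succ k ih =>
    have hsmooth : ContDiff ℝ (k + 1 : ℕ) (fun x => eval (L x) p) :=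
      (contDiff_eval p).comp L.contDiff
    have hdiff : DifferentiableAt ℝ (iteratedFDeriv ℝ k fun x => eval (L x) p) x :=
      (hsmooth.differentiable_iteratedFDeriv (by exact_mod_cast Nat.lt_succ_self k)) x
    rw [iteratedFDeriv_succ_apply_left, ← fderiv_continuousMultilinear_apply_const_apply hdiff]
    simp_rw [ih]
    have h := (hasFDerivAt_eval (mixedDeriv (List.ofFn fun i => L (Fin.tail m i)) p) (L x)).comp x
      L.hasFDerivAt
    rw [show (fun x => eval (L x) (mixedDeriv (List.ofFn fun i => L (Fin.tail m i)) p)) =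
      (fun z => eval z (mixedDeriv (List.ofFn fun i => L (Fin.tail m i)) p)) ∘ L from rfl,
      h.fderiv, List.ofFn_succ, mixedDeriv_cons, mixedDeriv_dirDeriv, dirDeriv_apply]
    simp [mul_comm, smul_eval, Fin.tail]

theorem polarForm_eq_eval_mixedDeriv {n d : ℕ} (f : MvPolynomial (Fin n) ℝ)
    (v : Fin d → Fin n → ℝ) :
    polarForm d f v = ((d.factorial : ℝ))⁻¹ * eval 0 (mixedDeriv (List.ofFn v) f) := by
  let L : (Fin d → ℝ) →L[ℝ] (Fin n → ℝ) :=
    ContinuousLinearMap.pi fun j => ∑ i, v i j • ContinuousLinearMap.proj (R := ℝ) i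
  have hL : ∀ x, (fun j => ∑ i, x i * v i j) = L x := by
    intro x; ext j
    simp [L, mul_comm]
  have hLs : ∀ i, L (Pi.single i 1) = v i := by
    intro i
    rw [← hL]
    ext j
    simp [Pi.single_apply]
  simp only [polarForm, hL, iteratedFDeriv_eval_comp, hLs, map_zero]

/-- The Hessian, at the origin, of the mixed derivative of `p` along `l`. -/
noncomputable def mixedHessian {n : ℕ} (l : List (Fin n → ℝ)) (p : MvPolynomial (Fin n) ℝ) :
    Matrix (Fin n) (Fin n) ℝ :=
  Matrix.of fun i j => eval 0 (mixedDeriv l (pderiv i (pderiv j p)))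

theorem eval_mixedDeriv_dirDeriv_dirDeriv {n : ℕ} (l : List (Fin n → ℝ)) (x y : Fin n → ℝ)
    (p : MvPolynomial (Fin n) ℝ) :
    eval 0 (mixedDeriv l (dirDeriv x (dirDeriv y p))) =
      x ⬝ᵥ mixedHessian l p *ᵥ y := by
  simp only [dirDeriv_apply, map_sum, map_smul, dotProduct, mulVec,
    mixedHessian, of_apply, smul_eval, Finset.mul_sum]
  rw [Finset.sum_comm]
  refine Finset.sum_congr rfl fun i _ => Finset.sum_congr rfl fun j _ => ?_
  ring

theorem continuous_eval_mixedDeriv_add {n : ℕ} (l : List (Fin n → ℝ))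
    (p : MvPolynomial (Fin n) ℝ) :
    Continuous fun ε : ℝ => eval 0 (mixedDeriv (l.map fun v i => v i + ε) p) := by
  induction l generalizing p with
  | nil => simpa using continuous_const
  | cons v l ih =>
    simp only [List.map_cons, mixedDeriv_cons, dirDeriv_apply, map_sum, map_smul, smul_eval]
    exact continuous_finsetSum _ fun i _ => (continuous_const.add continuous_id).mul (ih _)

theorem IsLorentzian.lorBase {n d : ℕ} {f : MvPolynomial (Fin n) ℝ} (hf : IsLorentzian d f) :
    LorBase d f := by
  match d, hf with
  | 0, hf => exact hf
  | 1, hf => exact hf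
  | 2, hf => exact hf.1
  | _ + 3, hf => exact hf.1

theorem coeff_pderiv_nonneg {n : ℕ} {p : MvPolynomial (Fin n) ℝ} (hp : ∀ m, 0 ≤ coeff m p)
    (i : Fin n) (m : Fin n →₀ ℕ) : 0 ≤ coeff m (pderiv i p) := by
  rw [coeff_pderiv]
  exact mul_nonneg (hp _) (by positivity)

theorem mixedHessian_isSymm {n : ℕ} (l : List (Fin n → ℝ)) (p : MvPolynomial (Fin n) ℝ) :
    (mixedHessian l p).IsSymm := by
  ext i j
  simp [mixedHessian, pderiv_comm i j]

theorem mixedHessian_nonneg {n : ℕ} {l : List (Fin n → ℝ)} (hl : ∀ v ∈ l, ∀ j, 0 ≤ v j)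
    {p : MvPolynomial (Fin n) ℝ} (hp : ∀ m, 0 ≤ coeff m p) (i j : Fin n) :
    0 ≤ mixedHessian l p i j := by
  rw [mixedHessian, of_apply, eval_zero, constantCoeff_eq]
  exact coeff_mixedDeriv_nonneg hl (coeff_pderiv_nonneg (coeff_pderiv_nonneg hp j) i) 0

theorem exists_coeff_ne_zero_of_mixedHessian_ne_zero {n : ℕ} {l : List (Fin n → ℝ)}
    {p : MvPolynomial (Fin n) ℝ} {i j : Fin n} (h : mixedHessian l p i j ≠ 0) :
    ∃ α, coeff α p ≠ 0 ∧ α i ≠ 0 := by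
  have hi : pderiv i p ≠ 0 := by
    intro h0
    apply h
    rw [mixedHessian, of_apply, pderiv_comm, h0]
    simp
  obtain ⟨m, hm⟩ := ne_zero_iff.1 hi
  rw [coeff_pderiv] at hm
  exact ⟨m + Finsupp.single i 1, left_ne_zero_of_mul hm, by simp⟩

theorem mixedHessian_pos {n : ℕ} {l : List (Fin n → ℝ)} (hl : ∀ v ∈ l, ∀ j, 0 < v j)
    {p : MvPolynomial (Fin n) ℝ} (hp : ∀ m, 0 ≤ coeff m p) (hd : p.IsHomogeneous (l.length + 2))
    {α : Fin n →₀ ℕ} (hα : coeff α p ≠ 0) {i j : Fin n}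
    (h : Finsupp.single i 1 + Finsupp.single j 1 ≤ α) : 0 < mixedHessian l p i j := by
  have hdeg : α.degree = l.length + 2 := by
    rw [Finsupp.degree_eq_weight_one]; exact hd hα
  obtain ⟨γ, rfl⟩ := exists_add_of_le h
  rw [mixedHessian, of_apply, eval_zero, constantCoeff_eq]
  refine coeff_mixedDeriv_pos (α := γ) hl
    (coeff_pderiv_nonneg (coeff_pderiv_nonneg hp j) i) ?_ zero_le ?_
  · rw [coeff_pderiv, coeff_pderiv, show γ + Finsupp.single i 1 + Finsupp.single j 1 =
      Finsupp.single i 1 + Finsupp.single j 1 + γ by rw [add_comm _ γ, add_assoc]]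
    have := (hp _).lt_of_ne' hα
    positivity
  · simp only [map_add, Finsupp.degree_single, map_zero] at hdeg ⊢
    omega

theorem LorBase.eq_of_mixedHessian_edges {n : ℕ} {l : List (Fin n → ℝ)}
    (hl : ∀ v ∈ l, ∀ j, 0 < v j) {f : MvPolynomial (Fin n) ℝ} (hf : LorBase (l.length + 2) f)
    (y : Fin n → ℝ) (hy : ∀ i j, mixedHessian l f i j ≠ 0 → y i = y j) (i j a b : Fin n)
    (hi : mixedHessian l f i a ≠ 0) (hj : mixedHessian l f j b ≠ 0) : y i = y j := by
  obtain ⟨hhom, hnn, hM⟩ := hf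
  have hsame : ∀ α, coeff α f ≠ 0 → ∀ a b, α a ≠ 0 → α b ≠ 0 → y a = y b := by
    intro α hα a b ha hb
    by_cases hab : a = b
    · rw [hab]
    · refine hy a b (mixedHessian_pos hl hnn hhom hα fun c => ?_).ne'
      simp only [Finsupp.add_apply, Finsupp.single_apply]
      split_ifs with h1 h2 h2
      · exact absurd (h1.trans h2.symm) hab
      · subst h1; omega
      · subst h2; omega
      · omega
  obtain ⟨α, hα, hαi⟩ := exists_coeff_ne_zero_of_mixedHessian_ne_zero hi
  obtain ⟨β, hβ, hβj⟩ := exists_coeff_ne_zero_of_mixedHessian_ne_zero hj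
  by_cases hβi : β i = 0
  · obtain ⟨c, hc, hγ⟩ := hM α hα β hβ i (by omega)
    have hle : Finsupp.single i 1 ≤ α := by
      simpa [Nat.one_le_iff_ne_zero] using hαi
    have hdeg : α.degree = l.length + 2 := by
      rw [Finsupp.degree_eq_weight_one]; exact hhom hα
    obtain ⟨δ, rfl⟩ := exists_add_of_le hle
    have hδ : δ ≠ 0 := by rintro rfl; simp at hdeg
    obtain ⟨e, he⟩ := Finsupp.ne_iff.1 hδ
    rw [Finsupp.zero_apply] at he
    rw [add_tsub_cancel_left] at hγ
    calc y i = y e := hsame _ hα i e hαi (by simp [he])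
      _ = y c := hsame _ hγ e c (by simp [he]) (by simp)
      _ = y j := hsame _ hβ c j (by omega) hβj
  · exact hsame β hβ i j hβi hβj

theorem mixedHessian_cons_apply {n : ℕ} (w : Fin n → ℝ) (l : List (Fin n → ℝ))
    (f : MvPolynomial (Fin n) ℝ) (i j : Fin n) :
    mixedHessian (w :: l) f i j = ∑ k, w k * mixedHessian l (pderiv k f) i j := by
  simp only [mixedHessian, of_apply, mixedDeriv_cons, dirDeriv_apply, map_sum, map_smul, smul_eval]
  refine Finset.sum_congr rfl fun k _ => ?_
  rw [pderiv_comm k i, pderiv_comm k j]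

theorem mixedHessian_pderiv_mulVec {n : ℕ} (w : Fin n → ℝ) (l : List (Fin n → ℝ))
    (f : MvPolynomial (Fin n) ℝ) (i : Fin n) :
    mixedHessian l (pderiv i f) *ᵥ w = mixedHessian (w :: l) f i := by
  ext j
  rw [mixedHessian_cons_apply]
  simp only [mulVec, dotProduct, mixedHessian, of_apply]
  refine Finset.sum_congr rfl fun k _ => ?_
  rw [mul_comm, pderiv_comm k i, pderiv_comm j i, pderiv_comm j k]

theorem dotProduct_mixedHessian_cons_mulVec {n : ℕ} (w : Fin n → ℝ) (l : List (Fin n → ℝ))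
    (f : MvPolynomial (Fin n) ℝ) (x : Fin n → ℝ) :
    x ⬝ᵥ mixedHessian (w :: l) f *ᵥ x =
      ∑ k, w k * (x ⬝ᵥ mixedHessian l (pderiv k f) *ᵥ x) := by
  have h : mixedHessian (w :: l) f = ∑ k, w k • mixedHessian l (pderiv k f) := by
    ext i j
    simp [mixedHessian_cons_apply, Matrix.sum_apply]
  simp only [h, sum_mulVec, dotProduct_sum, smul_mulVec, dotProduct_smul, smul_eq_mul]

theorem dotProduct_mulVec_nonneg {n : ℕ} {A : Matrix (Fin n) (Fin n) ℝ} (hA : ∀ i j, 0 ≤ A i j)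
    {y : Fin n → ℝ} (hy : ∀ i, 0 ≤ y i) : 0 ≤ y ⬝ᵥ A *ᵥ y := by
  simp only [dotProduct, mulVec]
  exact Finset.sum_nonneg fun i _ => mul_nonneg (hy i)
    (Finset.sum_nonneg fun j _ => mul_nonneg (hA i j) (hy j))

/-- If the mixed Hessians of all `∂ₖ f` satisfy the reversed Cauchy–Schwarz inequality in the
direction `w`, then the mixed Hessian of `f` is nonpositive on a hyperplane. -/
theorem mixedHessian_cons_nonpos {n : ℕ} {w : Fin n → ℝ} {l : List (Fin n → ℝ)}
    (hl : ∀ v ∈ w :: l, ∀ j, 0 < v j) {f : MvPolynomial (Fin n) ℝ} (hf : LorBase (l.length + 3) f)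
    (h : ∀ k x, (x ⬝ᵥ mixedHessian l (pderiv k f) *ᵥ x) *
      (w ⬝ᵥ mixedHessian l (pderiv k f) *ᵥ w) ≤ (x ⬝ᵥ mixedHessian l (pderiv k f) *ᵥ w) ^ 2)
    (x : Fin n → ℝ) (hx : (mixedHessian (w :: l) f *ᵥ w) ⬝ᵥ x = 0) :
    x ⬝ᵥ mixedHessian (w :: l) f *ᵥ x ≤ 0 := by
  have hw : ∀ j, 0 < w j := hl w List.mem_cons_self
  have hl0 : ∀ v ∈ l, ∀ j, 0 ≤ v j := fun v hv j => (hl v (List.mem_cons_of_mem _ hv) j).le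
  have hA : ∀ i u, u ⬝ᵥ mixedHessian l (pderiv i f) *ᵥ w = (mixedHessian (w :: l) f *ᵥ u) i :=
    fun i u => by rw [mixedHessian_pderiv_mulVec, dotProduct_comm]; rfl
  have hk0 : ∀ k i j, 0 ≤ mixedHessian l (pderiv k f) i j := fun k =>
    mixedHessian_nonneg hl0 (coeff_pderiv_nonneg hf.2.1 k)
  refine nonpos_of_bochner (mixedHessian_isSymm _ _)
    (mixedHessian_nonneg (fun v hv j => (hl v hv j).le) hf.2.1) hw
    (LorBase.eq_of_mixedHessian_edges hl hf) (fun u => ?_) x hx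
  rw [dotProduct_mixedHessian_cons_mulVec]
  refine Finset.sum_le_sum fun k _ => ?_
  rw [div_mul_eq_mul_div, mul_div_assoc]
  refine mul_le_mul_of_nonneg_left ?_ (hw k).le
  rw [← hA, ← hA]
  rcases (dotProduct_mulVec_nonneg (hk0 k) fun j => (hw j).le).eq_or_lt with hc | hc
  · rw [← hc, div_zero]
    have hzero : mixedHessian l (pderiv k f) = 0 := by
      simp only [dotProduct, mulVec] at hc
      ext i j
      have h1 := (Finset.sum_eq_zero_iff_of_nonneg fun i _ => mul_nonneg (hw i).le
        (Finset.sum_nonneg fun j _ => mul_nonneg (hk0 k i j) (hw j).le)).1 hc.symm i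
          (Finset.mem_univ i)
      have h2 := (Finset.sum_eq_zero_iff_of_nonneg fun j _ => mul_nonneg (hk0 k i j) (hw j).le).1
        ((mul_eq_zero.1 h1).resolve_left (hw i).ne') j (Finset.mem_univ j)
      exact (mul_eq_zero.1 h2).resolve_right (hw j).ne'
    simp [hzero]
  · rw [le_div_iff₀ hc]
    exact h k u

open Filter Topology in
theorem IsLorentzian.reverse_cauchy_schwarz {n : ℕ} (l : List (Fin n → ℝ))
    {f : MvPolynomial (Fin n) ℝ} (hf : IsLorentzian (l.length + 2) f)
    (hl : ∀ v ∈ l, ∀ j, 0 ≤ v j) (x : Fin n → ℝ) {y : Fin n → ℝ} (hy : ∀ j, 0 ≤ y j) :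
    (x ⬝ᵥ mixedHessian l f *ᵥ x) * (y ⬝ᵥ mixedHessian l f *ᵥ y) ≤
      (x ⬝ᵥ mixedHessian l f *ᵥ y) ^ 2 := by
  induction hk : l.length generalizing l f x y with
  | zero =>
    obtain rfl := List.length_eq_zero_iff.1 hk
    obtain ⟨a, ha⟩ := hf.2.exists_nonpos
    exact (mixedHessian_isSymm [] f).reverse_cauchy_schwarz (a := a) ha x
      (dotProduct_mulVec_nonneg (mixedHessian_nonneg hl hf.lorBase.2.1) hy)
  | succ k ih =>
    have key : ∀ l' : List (Fin n → ℝ), l'.length = k + 1 → (∀ v ∈ l', ∀ j, 0 < v j) →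
        (x ⬝ᵥ mixedHessian l' f *ᵥ x) * (y ⬝ᵥ mixedHessian l' f *ᵥ y) ≤
          (x ⬝ᵥ mixedHessian l' f *ᵥ y) ^ 2 := by
      intro l' hl' hpos
      match l', hl' with
      | w :: l', hl' =>
        rw [List.length_cons, Nat.add_right_cancel_iff] at hl'
        rw [hk] at hf
        have hn : ∀ v ∈ w :: l', ∀ j, 0 ≤ v j := fun v hv j => (hpos v hv j).le
        subst hl'
        exact (mixedHessian_isSymm _ f).reverse_cauchy_schwarz
          (mixedHessian_cons_nonpos hpos hf.1 fun k u => ih l' (hf.2 k)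
            (fun v hv => hn v (List.mem_cons_of_mem _ hv)) u (hn w List.mem_cons_self) rfl) x
          (dotProduct_mulVec_nonneg (mixedHessian_nonneg hn hf.lorBase.2.1) hy)
    simp only [← eval_mixedDeriv_dirDeriv_dirDeriv] at key ⊢
    have hlim : ∀ p : MvPolynomial (Fin n) ℝ, Tendsto
        (fun ε : ℝ => eval 0 (mixedDeriv (l.map fun v i => v i + ε) p)) (𝓝[>] 0)
        (𝓝 (eval 0 (mixedDeriv l p))) := by
      intro p
      have h := ((continuous_eval_mixedDeriv_add l p).tendsto 0).mono_left
        (nhdsWithin_le_nhds (s := Set.Ioi 0))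
      simpa using h
    refine le_of_tendsto_of_tendsto ((hlim _).mul (hlim _)) ((hlim _).pow 2) ?_
    filter_upwards [self_mem_nhdsWithin] with ε hε
    refine key _ (by simpa using hk) ?_
    simp only [List.mem_map]
    rintro _ ⟨v, hv, rfl⟩ j
    exact add_pos_of_nonneg_of_pos (hl v hv j) hε

theorem stmt7 {n d : ℕ} (hd : 2 ≤ d) (f : MvPolynomial (Fin n) ℝ)
    (hf : IsLorentzian d f) (v : Fin d → Fin n → ℝ)
    (hv : ∀ i : Fin d, i ≠ ⟨0, by omega⟩ → ∀ j, 0 ≤ v i j) :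
    polarForm d f (Function.update v ⟨1, by omega⟩ (v ⟨0, by omega⟩)) *
        polarForm d f (Function.update v ⟨0, by omega⟩ (v ⟨1, by omega⟩)) ≤
      (polarForm d f v) ^ 2 := by
  obtain ⟨k, rfl⟩ := Nat.exists_eq_add_of_le' hd
  have hform : ∀ u : Fin (k + 2) → Fin n → ℝ, polarForm (k + 2) f u =
      (((k + 2).factorial : ℝ))⁻¹ * (u 0 ⬝ᵥ
        mixedHessian (List.ofFn fun i : Fin k => u i.succ.succ) f *ᵥ u 1) := by
    intro u
    rw [polarForm_eq_eval_mixedDeriv, List.ofFn_succ, List.ofFn_succ, mixedDeriv_cons,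
      mixedDeriv_cons, dirDeriv_comm, eval_mixedDeriv_dirDeriv_dirDeriv]
    rfl
  have h := IsLorentzian.reverse_cauchy_schwarz (List.ofFn fun i : Fin k => v i.succ.succ) (f := f)
    (by simpa using hf)
    (by
      intro u hu j
      obtain ⟨i, rfl⟩ := (List.mem_ofFn' _ _).1 hu
      exact hv _ (Fin.succ_ne_zero _) j) (v 0) (y := v 1) (hv 1 (by simp))
  have h1 : ∀ i : Fin k, i.succ.succ ≠ (1 : Fin (k + 2)) := fun i => by simp [Fin.ext_iff]
  have e0 : (⟨0, by omega⟩ : Fin (k + 2)) = 0 := rfl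
  have e1 : (⟨1, by omega⟩ : Fin (k + 2)) = 1 := rfl
  rw [e0, e1, hform, hform, hform]
  simp only [Function.update_self, Function.update_of_ne (zero_ne_one' (Fin (k + 2))),
    Function.update_of_ne (zero_ne_one' (Fin (k + 2))).symm, Function.update_of_ne (h1 _),
    Function.update_of_ne (Fin.succ_ne_zero _)]
  have hc : (0 : ℝ) ≤ (((k + 2).factorial : ℝ)⁻¹) ^ 2 := sq_nonneg _
  calc _ = (((k + 2).factorial : ℝ)⁻¹) ^ 2 * _ := by ring
    _ ≤ _ := mul_le_mul_of_nonneg_left h hc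
    _ = _ := by ring
end

section
/- For any matroid M on [n] and any positive integer k, I_k(M)²/C(n,k)² ≥ (I_{k+1}(M)/C(n,k+1))·(I_{k−1}(M)/C(n,k−1)), where I_k(M) is the number of k-element independent sets of M. (Mason's strongest conjecture.) -/
/-- The number of `k`-element independent sets of a matroid. -/
noncomputable def numIndep {n : ℕ} (M : Matroid (Fin n)) (k : ℕ) : ℕ :=
  Nat.card {A : Finset (Fin n) // A.card = k ∧ M.Indep ↑A}

open Matrix in
/-- A symmetric matrix `H` and a nonnegative diagonal matrix `D` whose kernel is contained in the
kernel of `H` can be diagonalized simultaneously. -/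
theorem exists_simultaneous_diagonalization {ι : Type*} [Fintype ι] [DecidableEq ι]
    {H : Matrix ι ι ℝ} (hH : H.IsSymm) {D : ι → ℝ} (hD : ∀ i, 0 ≤ D i)
    (h0 : ∀ i j, D i = 0 → H i j = 0) :
    ∃ (μ : ι → ℝ) (x : ι → ι → ℝ), (∀ k, H *ᵥ x k = μ k • (D * x k)) ∧
      ∀ z, z ⬝ᵥ H *ᵥ z = ∑ k, μ k * (z ⬝ᵥ (D * x k)) ^ 2 := by
  set s : ι → ℝ := fun i => √(D i) with hs
  have hss : ∀ i, s i * s i = D i := fun i => Real.mul_self_sqrt (hD i)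
  have hs0 : ∀ i, s i = 0 → D i = 0 := fun i h => by rw [← hss, h, zero_mul]
  have hsym : ∀ i j, H i j = H j i := fun i j => hH.apply j i
  set S : Matrix ι ι ℝ := Matrix.of fun i j => H i j / (s i * s j) with hS
  have hHS : ∀ i j, H i j = s i * S i j * s j := by
    intro i j
    rcases eq_or_ne (s i) 0 with hi | hi
    · rw [h0 i j (hs0 i hi), hi]; ring
    rcases eq_or_ne (s j) 0 with hj | hj
    · rw [hsym, h0 j i (hs0 j hj), hj]; ring
    simp only [hS, Matrix.of_apply]
    field_simp
  have hSherm : S.IsHermitian := by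
    ext i j
    simp [hS, hsym j i, mul_comm]
  set b := hSherm.eigenvectorBasis with hb
  have hSb : ∀ k, S *ᵥ (b k).ofLp = hSherm.eigenvalues k • (b k).ofLp :=
    hSherm.mulVec_eigenvectorBasis
  refine ⟨hSherm.eigenvalues, fun k i => b k i / s i, fun k => ?_, fun z => ?_⟩
  · ext i
    have h1 := congrFun (hSb k) i
    simp only [Matrix.mulVec, dotProduct, Pi.smul_apply, smul_eq_mul, Pi.mul_apply] at h1 ⊢
    have h2 : ∑ j, H i j * (b k j / s j) = s i * ∑ j, S i j * b k j := by
      rw [Finset.mul_sum]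
      refine Finset.sum_congr rfl fun j _ => ?_
      rcases eq_or_ne (s j) 0 with hj | hj
      · have : S i j = 0 := by simp [hS, hj]
        rw [hHS, this]; ring
      rw [hHS]; field_simp
    rw [h2, h1, ← hss]
    rcases eq_or_ne (s i) 0 with hi | hi
    · rw [hi]; ring
    field_simp
  · have h1 : z ⬝ᵥ H *ᵥ z = (s * z) ⬝ᵥ S *ᵥ (s * z) := by
      simp only [Matrix.mulVec, dotProduct, Pi.mul_apply, Finset.mul_sum]
      refine Finset.sum_congr rfl fun i _ => Finset.sum_congr rfl fun j _ => ?_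
      rw [hHS]; ring
    have h2 : ∀ k, (b k).ofLp ⬝ᵥ (s * z) = z ⬝ᵥ (D * fun i => b k i / s i) := by
      intro k
      simp only [dotProduct, Pi.mul_apply]
      refine Finset.sum_congr rfl fun i _ => ?_
      rw [← hss]
      rcases eq_or_ne (s i) 0 with hi | hi
      · rw [hi]; ring
      field_simp
    have h3 := b.sum_inner_mul_inner (WithLp.toLp 2 (s * z)) (WithLp.toLp 2 (S *ᵥ (s * z)))
    simp only [EuclideanSpace.inner_eq_star_dotProduct, star_trivial] at h3
    rw [h1, dotProduct_comm, ← h3]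
    refine Finset.sum_congr rfl fun k _ => ?_
    have h4 : S *ᵥ (s * z) ⬝ᵥ (b k).ofLp = hSherm.eigenvalues k * ((b k).ofLp ⬝ᵥ (s * z)) := by
      have hST : Sᵀ = S := by
        ext i j
        simp [hS, hsym j i, mul_comm]
      rw [dotProduct_comm, dotProduct_mulVec, ← mulVec_transpose, hST, hSb, smul_dotProduct,
        smul_eq_mul]
    rw [h4, ← h2]; ring

open Matrix in
/-- The reverse Cauchy–Schwarz inequality for the symmetric bilinear form `H` at the vector `v`. -/
def Matrix.IsLorentzianAt {ι : Type*} [Fintype ι] (H : Matrix ι ι ℝ) (v : ι → ℝ) : Prop :=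
  ∀ w, (w ⬝ᵥ H *ᵥ w) * (v ⬝ᵥ H *ᵥ v) ≤ (w ⬝ᵥ H *ᵥ v) ^ 2

open Matrix in
theorem Matrix.IsSymm.dotProduct_mulVec_comm_s17 {ι : Type*} [Fintype ι] {H : Matrix ι ι ℝ}
    (hH : H.IsSymm) (x y : ι → ℝ) : x ⬝ᵥ H *ᵥ y = y ⬝ᵥ H *ᵥ x := by
  rw [dotProduct_mulVec, ← mulVec_transpose, hH.eq, dotProduct_comm]

open Matrix in
/-- If a symmetric form satisfies the reverse Cauchy–Schwarz inequality at a positive vector, then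
it does so at every nonnegative vector. -/
theorem Matrix.IsLorentzianAt.of_pos {ι : Type*} [Fintype ι] {H : Matrix ι ι ℝ} (hH : H.IsSymm)
    {e v : ι → ℝ} (he : H.IsLorentzianAt e) (hpos : 0 < e ⬝ᵥ H *ᵥ e) (hv : 0 ≤ v ⬝ᵥ H *ᵥ v) :
    H.IsLorentzianAt v := by
  intro w
  rcases hv.eq_or_lt with hv | hv
  · rw [← hv, mul_zero]; positivity
  by_contra! hlt
  have hve := he v
  have hz := he ((v ⬝ᵥ H *ᵥ e) • w - (w ⬝ᵥ H *ᵥ e) • v)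
  simp only [sub_dotProduct, smul_dotProduct, mulVec_sub, mulVec_smul, dotProduct_sub,
    dotProduct_smul, smul_eq_mul] at hz
  rw [hH.dotProduct_mulVec_comm_s17 v w] at hz
  set a := v ⬝ᵥ H *ᵥ e
  set b := w ⬝ᵥ H *ᵥ e
  set p := v ⬝ᵥ H *ᵥ v
  set q := w ⬝ᵥ H *ᵥ v
  set r := w ⬝ᵥ H *ᵥ w
  set c := e ⬝ᵥ H *ᵥ e
  have ha : 0 < a ^ 2 := lt_of_lt_of_le (mul_pos hv hpos) hve
  have h1 : a ^ 2 * r - 2 * a * b * q + b ^ 2 * p ≤ 0 := by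
    by_contra! h
    have := mul_pos h hpos
    nlinarith
  have h2 := mul_nonneg hv.le (sub_nonneg.2 h1)
  nlinarith [sq_nonneg (b * p - a * q), mul_pos ha (sub_pos.2 hlt)]

open Matrix in
/-- The Lorentzian property of all the slices `T i` of a nonnegative symmetric tensor is inherited
by the contraction of the tensor, provided the latter is suitably connected. -/
theorem Matrix.isLorentzianAt_of_slices {ι : Type*} [Fintype ι] [DecidableEq ι]
    {H : Matrix ι ι ℝ} (hH : H.IsSymm) (hnn : ∀ i j, 0 ≤ H i j) {v : ι → ℝ} (hv : ∀ i, 0 < v i)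
    {c : ℝ} (hc : 0 < c) {T : ι → Matrix ι ι ℝ} (hTnn : ∀ i j k, 0 ≤ T i j k)
    (hT : ∀ i, (T i).IsLorentzianAt v) (hTv : ∀ i j, (T i *ᵥ v) j = c * H i j)
    (hsum : ∀ j k, ∑ i, v i * T i j k = c * H j k)
    (i₀ : ι) (hstar : ∀ i, H i i₀ = 0 → ∀ j, H i j = 0) : H.IsLorentzianAt v := by
  have hsym : ∀ i j, H i j = H j i := fun i j => hH.apply j i
  set r : ι → ℝ := H *ᵥ v with hr
  have hr_nn : ∀ i, 0 ≤ r i := fun i =>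
    Finset.sum_nonneg fun j _ => mul_nonneg (hnn i j) (hv j).le
  have hr0 : ∀ i, r i = 0 → ∀ j, H i j = 0 := by
    intro i hi j
    have := (Finset.sum_eq_zero_iff_of_nonneg
      fun j _ => mul_nonneg (hnn i j) (hv j).le).1 hi j (Finset.mem_univ j)
    exact (mul_eq_zero.1 this).resolve_right (hv j).ne'
  have hslice : ∀ w i, w ⬝ᵥ T i *ᵥ w ≤ c * ((H *ᵥ w) i ^ 2 / r i) := by
    intro w i
    have hTv' : T i *ᵥ v = c • H i := by ext j; simp [hTv]
    have h1 := hT i w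
    have h2 : w ⬝ᵥ T i *ᵥ v = c * (H *ᵥ w) i := by
      rw [hTv', dotProduct_smul, dotProduct_comm]; rfl
    have h3 : v ⬝ᵥ T i *ᵥ v = c * r i := by
      rw [hTv', dotProduct_smul, dotProduct_comm]; rfl
    rw [h2, h3] at h1
    rcases (hr_nn i).eq_or_lt with hi | hi
    · have hTi : ∀ j k, T i j k = 0 := by
        intro j k
        have h4 : ∑ k, T i j k * v k = 0 := by
          have := hTv i j
          rw [hr0 i hi.symm j, mul_zero] at this
          exact this
        have := (Finset.sum_eq_zero_iff_of_nonneg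
          fun k _ => mul_nonneg (hTnn i j k) (hv k).le).1 h4 k (Finset.mem_univ k)
        exact (mul_eq_zero.1 this).resolve_right (hv k).ne'
      simp [← hi, dotProduct, mulVec, hTi]
    · rw [mul_div_assoc', le_div_iff₀ hi]
      refine le_of_mul_le_mul_left ?_ hc
      nlinarith
  have hbochner : ∀ w, w ⬝ᵥ H *ᵥ w ≤ ∑ i, v i * ((H *ᵥ w) i ^ 2 / r i) := by
    intro w
    refine le_of_mul_le_mul_left ?_ hc
    have h1 : c * (w ⬝ᵥ H *ᵥ w) = ∑ i, v i * (w ⬝ᵥ T i *ᵥ w) := by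
      have hcH : c • H = ∑ i, v i • T i := by
        ext j k
        simp [Matrix.sum_apply, hsum]
      rw [← smul_eq_mul, ← dotProduct_smul, ← smul_mulVec, hcH, sum_mulVec, dotProduct_sum]
      simp only [smul_mulVec, dotProduct_smul, smul_eq_mul]
    rw [h1, Finset.mul_sum]
    refine Finset.sum_le_sum fun i _ => ?_
    have := mul_le_mul_of_nonneg_left (hslice w i) (hv i).le
    linarith
  set D : ι → ℝ := fun i => r i / v i with hD
  have hD_nn : ∀ i, 0 ≤ D i := fun i => div_nonneg (hr_nn i) (hv i).le
  obtain ⟨μ, x, hx, hdiag⟩ := exists_simultaneous_diagonalization hH hD_nn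
    fun i j hi => hr0 i ((div_eq_zero_iff.1 hi).resolve_right (hv i).ne') j
  have key : ∀ z, z ⬝ᵥ H *ᵥ v = 0 → z ⬝ᵥ H *ᵥ z ≤ 0 := by
    intro z hz
    rw [hdiag]
    refine Finset.sum_nonpos fun k _ => ?_
    rcases le_or_gt (μ k) 0 with hk | hk
    · exact mul_nonpos_of_nonpos_of_nonneg hk (sq_nonneg _)
    suffices h : z ⬝ᵥ (D * x k) = 0 by simp [h]
    have hxk : ∀ i, (H *ᵥ x k) i = μ k * (D i * x k i) := fun i => by rw [hx]; rfl
    set y : ι → ℝ := fun i => x k i / v i with hy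
    have hxy : ∀ i, x k i = v i * y i := fun i => by
      simp only [hy]; field_simp [(hv i).ne']
    set q : ℝ := ∑ i, v i * r i * y i ^ 2 with hq
    have hq_nn : ∀ i ∈ Finset.univ, 0 ≤ v i * r i * y i ^ 2 := fun i _ =>
      mul_nonneg (mul_nonneg (hv i).le (hr_nn i)) (sq_nonneg _)
    have hDx : ∀ i, D i * x k i = r i * y i := fun i => by
      simp only [hD, hy]; ring
    have h1 : x k ⬝ᵥ H *ᵥ x k = μ k * q := by
      simp only [dotProduct, hxk, hq, Finset.mul_sum]
      refine Finset.sum_congr rfl fun i _ => ?_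
      rw [hDx, hxy]; ring
    have h2 : ∑ i, v i * ((H *ᵥ x k) i ^ 2 / r i) = μ k ^ 2 * q := by
      rw [hq, Finset.mul_sum]
      refine Finset.sum_congr rfl fun i _ => ?_
      rw [hxk, hDx]
      rcases (hr_nn i).eq_or_lt with hi | hi
      · simp [← hi]
      field_simp
    have h3 := hbochner (x k)
    rw [h1, h2] at h3
    rcases (Finset.sum_nonneg hq_nn).eq_or_lt with h0 | h0
    · refine Finset.sum_eq_zero fun i hi => ?_
      have := (Finset.sum_eq_zero_iff_of_nonneg hq_nn).1 h0.symm i hi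
      rw [Pi.mul_apply, hDx]
      rcases mul_eq_zero.1 this with h | h
      · rw [(mul_eq_zero.1 h).resolve_left (hv i).ne']; ring
      · rw [pow_eq_zero_iff two_ne_zero] at h
        rw [h]; ring
    have hμ : 1 ≤ μ k := by
      have : 0 < μ k * q := mul_pos hk h0
      by_contra! hlt
      nlinarith
    have h4 : ∑ i, ∑ j, H i j * v i * v j * (y i - y j) ^ 2 = 2 * (1 - μ k) * q := by
      have e1 : ∑ i, ∑ j, H i j * v i * v j * y i ^ 2 = q := by
        refine Finset.sum_congr rfl fun i _ => ?_
        simp only [hr, mulVec, dotProduct, Finset.mul_sum, Finset.sum_mul]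
        refine Finset.sum_congr rfl fun j _ => by ring
      have e2 : ∑ i, ∑ j, H i j * v i * v j * y j ^ 2 = q := by
        rw [Finset.sum_comm, ← e1]
        refine Finset.sum_congr rfl fun i _ => Finset.sum_congr rfl fun j _ => ?_
        rw [hsym]; ring
      have e3 : ∑ i, ∑ j, H i j * v i * v j * (y i * y j) = μ k * q := by
        rw [← h1]
        simp only [dotProduct, mulVec, Finset.mul_sum]
        refine Finset.sum_congr rfl fun i _ => Finset.sum_congr rfl fun j _ => ?_
        rw [hxy, hxy]; ring
      have : 2 * (1 - μ k) * q = q + q - 2 * (μ k * q) := by ring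
      rw [this, ← e3]
      nth_rewrite 1 [← e1]
      rw [← e2]
      simp only [Finset.mul_sum, ← Finset.sum_add_distrib, ← Finset.sum_sub_distrib]
      refine Finset.sum_congr rfl fun i _ => Finset.sum_congr rfl fun j _ => by ring
    have h5 : ∀ i j, 0 ≤ H i j * v i * v j * (y i - y j) ^ 2 := fun i j =>
      mul_nonneg (mul_nonneg (mul_nonneg (hnn i j) (hv i).le) (hv j).le) (sq_nonneg _)
    have h6 : ∑ i, ∑ j, H i j * v i * v j * (y i - y j) ^ 2 = 0 :=
      le_antisymm (by rw [h4]; nlinarith)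
        (Finset.sum_nonneg fun i _ => Finset.sum_nonneg fun j _ => h5 i j)
    have h7 : ∀ i, r i * y i = y i₀ * r i := by
      intro i
      rcases eq_or_ne (H i i₀) 0 with hi | hi
      · have : r i = 0 := Finset.sum_eq_zero fun j _ => by
          change H i j * v j = 0
          rw [hstar i hi j, zero_mul]
        rw [this]; ring
      · have := (Finset.sum_eq_zero_iff_of_nonneg fun i _ =>
          Finset.sum_nonneg fun j _ => h5 i j).1 h6 i (Finset.mem_univ i)
        have := (Finset.sum_eq_zero_iff_of_nonneg fun j _ => h5 i j).1 this i₀ (Finset.mem_univ i₀)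
        have := (mul_eq_zero.1 this).resolve_left
          (mul_ne_zero (mul_ne_zero hi (hv i).ne') (hv i₀).ne')
        rw [pow_eq_zero_iff two_ne_zero, sub_eq_zero] at this
        rw [this]; ring
    have h8 : D * x k = y i₀ • r := by
      ext i
      rw [Pi.mul_apply, hDx, h7]; rfl
    rw [h8, dotProduct_smul, hz, smul_zero]
  intro w
  rcases eq_or_ne (v ⬝ᵥ H *ᵥ v) 0 with h0 | h0
  · rw [h0, mul_zero]; positivity
  have hpos : 0 < v ⬝ᵥ H *ᵥ v :=
    lt_of_le_of_ne (Finset.sum_nonneg fun i _ => mul_nonneg (hv i).le (hr_nn i)) h0.symm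
  have hz := key ((v ⬝ᵥ H *ᵥ v) • w - (w ⬝ᵥ H *ᵥ v) • v) (by
    simp only [sub_dotProduct, smul_dotProduct, smul_eq_mul]; ring)
  simp only [sub_dotProduct, smul_dotProduct, mulVec_sub, mulVec_smul, dotProduct_sub,
    dotProduct_smul, smul_eq_mul] at hz
  rw [hH.dotProduct_mulVec_comm_s17 v w] at hz
  refine le_of_mul_le_mul_left ?_ hpos
  nlinarith

/-- Two nonloops `x`, `z` of the contraction of `M` by an independent set `S` are nonparallel iff the
flats they span together with `S` differ. -/
theorem Matroid.insert_insert_indep_iff_closure_ne {α : Type*} {M : Matroid α} {S : Set α} {x z : α}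
    (hS : M.Indep S) (hx : M.Indep (insert x S)) (hz : M.Indep (insert z S)) (hzS : z ∉ S) :
    (x ≠ z ∧ M.Indep (insert z (insert x S))) ↔
      M.closure (insert x S) ≠ M.closure (insert z S) := by
  have hzE : z ∈ M.E := hz.subset_ground (Set.mem_insert _ _)
  constructor
  · rintro ⟨hne, hi⟩ heq
    have h1 : z ∈ M.closure (insert x S) := by
      rw [heq]
      exact M.mem_closure_of_mem (Set.mem_insert _ _) hz.subset_ground
    refine (hx.notMem_closure_iff hzE).2 ⟨hi, ?_⟩ h1
    rintro (h | h)
    · exact hne h.symm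
    · exact hzS h
  · intro hne
    have hxz : x ≠ z := by rintro rfl; exact hne rfl
    refine ⟨hxz, ?_⟩
    by_contra hi
    refine hne (Matroid.closure_insert_congr ⟨?_, (hS.notMem_closure_iff hzE).2 ⟨hz, hzS⟩⟩).symm
    by_contra h
    exact hi ((hx.notMem_closure_iff hzE).1 h).1

/-- The Cauchy–Schwarz inequality for the sums of `f` over the fibers of `φ`. -/
theorem sq_sum_le_card_mul_sum_fiber_mul {α β : Type*} [DecidableEq β] (L : Finset α) (φ : α → β)
    (f : α → ℝ) :
    (∑ x ∈ L, f x) ^ 2 ≤ L.card * ∑ x ∈ L, ∑ z ∈ L, if φ x = φ z then f x * f z else 0 := by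
  have h1 : ∑ x ∈ L, ∑ z ∈ L, (if φ x = φ z then f x * f z else 0) =
      ∑ c ∈ L.image φ, (∑ x ∈ L with φ x = c, f x) ^ 2 := by
    rw [← Finset.sum_fiberwise_of_maps_to (t := L.image φ)
      fun x hx => Finset.mem_image_of_mem φ hx]
    refine Finset.sum_congr rfl fun c _ => ?_
    rw [sq, Finset.sum_mul_sum]
    refine Finset.sum_congr rfl fun x hx => ?_
    rw [Finset.sum_filter]
    refine Finset.sum_congr rfl fun z _ => ?_
    rw [(Finset.mem_filter.1 hx).2]
    simp only [eq_comm]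
  rw [h1, ← Finset.sum_fiberwise_of_maps_to (t := L.image φ)
      fun x hx => Finset.mem_image_of_mem φ hx]
  refine sq_sum_le_card_mul_sum_sq.trans ?_
  gcongr
  exact Finset.card_image_le

namespace Matroid

/-- The index of a single partial derivative, in the sense of `Matroid.indepDeriv`. -/
def derivIndex {α : Type*} : Option α → Multiset α × ℕ
  | none => (0, 1)
  | some i => ({i}, 0)

theorem card_add_derivIndex {α : Type*} (s : Multiset α × ℕ) (i : Option α) :
    (s + derivIndex i).1.card + (s + derivIndex i).2 = s.1.card + s.2 + 1 := by
  cases i <;> simp [derivIndex] <;> lia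

variable {α : Type*} [Fintype α]

open Classical in
/-- The independent sets containing the multiset `m`. -/
noncomputable def indepAbove (M : Matroid α) (m : Multiset α) : Finset (Finset α) :=
  Finset.univ.filter fun A : Finset α => M.Indep A ∧ m ≤ A.val

theorem mem_indepAbove {M : Matroid α} {m : Multiset α} {A : Finset α} :
    A ∈ M.indepAbove m ↔ M.Indep A ∧ m ≤ A.val := by
  simp [indepAbove]

/-- For `s = (m, a)`, the value at `(t, 1, …, 1)` of the partial derivative of the polynomial
`∑ y ^ (n - |A|) * ∏ i ∈ A, x i` (the sum ranges over the independent sets `A`) taken `a` times with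
respect to `y` and once with respect to `x i` for every `i` in the multiset `m`. -/
noncomputable def indepDeriv (M : Matroid α) (t : ℝ) (s : Multiset α × ℕ) : ℝ :=
  ∑ A ∈ M.indepAbove s.1,
    ((Fintype.card α - A.card).descFactorial s.2 : ℝ) * t ^ (Fintype.card α - A.card - s.2)

/-- The evaluation point `(t, 1, …, 1)`. -/
def evalPoint (α : Type*) (t : ℝ) (i : Option α) : ℝ := i.elim t fun _ => 1

/-- The Hessian matrix of the partial derivative `M.indepDeriv t s`. -/
noncomputable def indepHessian (M : Matroid α) (t : ℝ) (s : Multiset α × ℕ) :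
    Matrix (Option α) (Option α) ℝ :=
  Matrix.of fun i j => M.indepDeriv t (s + derivIndex i + derivIndex j)

variable {M : Matroid α} {t : ℝ}

theorem indepDeriv_nonneg (ht : 0 ≤ t) (s : Multiset α × ℕ) : 0 ≤ M.indepDeriv t s :=
  Finset.sum_nonneg fun _ _ => by positivity

theorem indepDeriv_val_pos (ht : 0 < t) {S : Finset α} (hS : M.Indep S) {a : ℕ}
    (ha : S.card + a ≤ Fintype.card α) : 0 < M.indepDeriv t (S.val, a) := by
  classical
  refine Finset.sum_pos' (fun _ _ => by positivity) ⟨S, mem_indepAbove.2 ⟨hS, le_rfl⟩, ?_⟩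
  have : 0 < (Fintype.card α - S.card).descFactorial a :=
    Nat.descFactorial_pos.2 (by lia)
  positivity

theorem indepDeriv_eq_zero_of_le (ht : 0 < t) {m m' : Multiset α} {a : ℕ}
    (h : M.indepDeriv t (m, a) = 0) (ha : m.card + a ≤ Fintype.card α) (hm : m ≤ m') (a' : ℕ) :
    M.indepDeriv t (m', a') = 0 := by
  classical
  refine Finset.sum_eq_zero fun A hA => ?_
  obtain ⟨hAi, hmA⟩ := mem_indepAbove.1 hA
  have hle : m ≤ A.val := hm.trans hmA
  let S : Finset α := ⟨m, Multiset.nodup_of_le hle A.nodup⟩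
  have hSA : S ⊆ A := Finset.val_le_iff.1 hle
  exact absurd h (indepDeriv_val_pos ht (S := S) (hAi.subset (by exact_mod_cast hSA)) ha).ne'

open Classical in
theorem indepDeriv_of_card_add_eq {m : Multiset α} {a : ℕ} (h : m.card + a = Fintype.card α) :
    M.indepDeriv t (m, a) = if m.Nodup ∧ M.Indep {x | x ∈ m} then (a.factorial : ℝ) else 0 := by
  have hterm : ∀ A : Finset α, M.Indep A ∧ m ≤ A.val → A.val ≠ m →
      ((Fintype.card α - A.card).descFactorial a : ℝ) *
        t ^ (Fintype.card α - A.card - a) = 0 := by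
    intro A hA hne
    have hlt : m.card < A.card := Multiset.card_lt_card (lt_of_le_of_ne hA.2 hne.symm)
    have hA' : A.card ≤ Fintype.card α := Finset.card_le_univ A
    rw [Nat.descFactorial_eq_zero_iff_lt.2 (by lia)]
    simp
  split_ifs with hm
  · let S : Finset α := ⟨m, hm.1⟩
    have hS : M.Indep S := by
      convert hm.2 using 1
      ext x
      rfl
    refine (Finset.sum_eq_single_of_mem S (mem_indepAbove.2 ⟨hS, le_rfl⟩) ?_).trans ?_
    · intro A hA hne
      refine hterm A (mem_indepAbove.1 hA) fun h => hne (Finset.val_injective h)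
    · have : Fintype.card α - S.card = a := by
        change Fintype.card α - m.card = a
        lia
      simp [this, Nat.descFactorial_self]
  · refine Finset.sum_eq_zero fun A hA => hterm A (mem_indepAbove.1 hA) ?_
    rintro rfl
    exact hm ⟨A.nodup, (mem_indepAbove.1 hA).1⟩

/-- Euler's identity for the homogeneous polynomial `M.indepDeriv · s`. -/
theorem sum_indepDeriv_add_derivIndex (s : Multiset α × ℕ) :
    ∑ k, M.indepDeriv t (s + derivIndex k) * evalPoint α t k =
      ((Fintype.card α : ℝ) - s.1.card - s.2) * M.indepDeriv t s := by
  classical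
  obtain ⟨m, a⟩ := s
  set n := Fintype.card α
  set g : Finset α → ℝ := fun A => ((n - A.card).descFactorial a : ℝ) * t ^ (n - A.card - a) with hg
  rw [Fintype.sum_option]
  have h1 : ∑ i : α, M.indepDeriv t ((m, a) + derivIndex (some i)) * evalPoint α t (some i) =
      ∑ A ∈ M.indepAbove m, ((A.card : ℝ) - m.card) * g A := by
    have h2 : ∀ i : α, M.indepDeriv t ((m, a) + derivIndex (some i)) * evalPoint α t (some i) =
        ∑ A ∈ M.indepAbove m, if i ::ₘ m ≤ A.val then g A else 0 := by
      intro i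
      rw [← Finset.sum_filter]
      simp only [evalPoint, Option.elim, mul_one, indepDeriv, derivIndex, Prod.mk_add_mk, add_zero]
      refine Finset.sum_congr ?_ fun A _ => rfl
      ext A
      rw [Finset.mem_filter, mem_indepAbove, mem_indepAbove, add_comm m, Multiset.singleton_add,
        and_assoc]
      exact and_congr_right fun _ =>
        ⟨fun h => ⟨(Multiset.le_cons_self m i).trans h, h⟩, fun h => h.2⟩
    simp only [h2]
    rw [Finset.sum_comm]
    refine Finset.sum_congr rfl fun A hA => ?_
    obtain ⟨-, hmA⟩ := mem_indepAbove.1 hA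
    have hnd : m.Nodup := Multiset.nodup_of_le hmA A.nodup
    let S : Finset α := ⟨m, hnd⟩
    have hSA : S ⊆ A := Finset.val_le_iff.1 hmA
    have hset : (Finset.univ.filter fun i : α => i ::ₘ m ≤ A.val) = A \ S := by
      ext i
      simp only [Finset.mem_filter, Finset.mem_univ, true_and, Finset.mem_sdiff]
      constructor
      · intro h
        have := Multiset.nodup_of_le h A.nodup
        exact ⟨Multiset.mem_of_le h (Multiset.mem_cons_self i m), (Multiset.nodup_cons.1 this).1⟩
      · rintro ⟨hi, hiS⟩
        exact (Multiset.cons_le_of_notMem hiS).2 ⟨hi, hmA⟩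
    rw [← Finset.sum_filter, hset, Finset.sum_const, Finset.card_sdiff_of_subset hSA, nsmul_eq_mul,
      Nat.cast_sub (Finset.card_le_card hSA)]
    rfl
  rw [h1]
  simp only [indepDeriv, derivIndex, evalPoint, Option.elim, Prod.mk_add_mk, add_zero]
  rw [Finset.sum_mul, ← Finset.sum_add_distrib, Finset.mul_sum]
  refine Finset.sum_congr rfl fun A _ => ?_
  have hAn : A.card ≤ n := Finset.card_le_univ A
  simp only [hg]
  rcases lt_or_ge a (n - A.card) with h | h
  · obtain ⟨b, hb⟩ : ∃ b, n - A.card = a + b + 1 := ⟨n - A.card - a - 1, by lia⟩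
    have hn : (n : ℝ) = A.card + a + b + 1 := by
      have : n = A.card + a + b + 1 := by lia
      exact_mod_cast this
    rw [Nat.descFactorial_succ, hb, hn, show a + b + 1 - (a + 1) = b by lia,
      show a + b + 1 - a = b + 1 by lia]
    push_cast
    ring
  · rw [Nat.descFactorial_eq_zero_iff_lt.2 (by lia : n - A.card < a + 1)]
    rcases h.eq_or_lt with h | h
    · have hn : (n : ℝ) = A.card + a := by
        have : n = A.card + a := by lia
        exact_mod_cast this
      rw [hn]; push_cast; ring
    · rw [Nat.descFactorial_eq_zero_iff_lt.2 h]
      simp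

theorem indepHessian_isSymm (s : Multiset α × ℕ) : (M.indepHessian t s).IsSymm := by
  ext i j
  simp only [indepHessian, Matrix.transpose_apply, Matrix.of_apply]
  rw [add_right_comm]

theorem indepHessian_mulVec_evalPoint (s : Multiset α × ℕ) (i : Option α) :
    (M.indepHessian t s).mulVec (evalPoint α t) i =
      ((Fintype.card α : ℝ) - s.1.card - s.2 - 1) * M.indepDeriv t (s + derivIndex i) := by
  refine (sum_indepDeriv_add_derivIndex (s + derivIndex i)).trans ?_
  have : ((s + derivIndex i).1.card : ℝ) + (s + derivIndex i).2 = s.1.card + s.2 + 1 := by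
    exact_mod_cast card_add_derivIndex s i
  congr 1
  linarith

theorem indepHessian_eq_zero_of_none (ht : 0 < t) {s : Multiset α × ℕ}
    (hs : s.1.card + s.2 + 2 ≤ Fintype.card α) {i : Option α}
    (h : M.indepHessian t s i none = 0) (j : Option α) : M.indepHessian t s i j = 0 := by
  have hc := card_add_derivIndex (s + derivIndex i) none
  have hc' := card_add_derivIndex s i
  have h' : M.indepDeriv t
      ((s + derivIndex i + derivIndex none).1, (s + derivIndex i + derivIndex none).2) = 0 := h
  refine indepDeriv_eq_zero_of_le ht h' (by lia) ?_ _
  simp [derivIndex]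

open Matrix in
theorem indepHessian_isLorentzianAt_of_card (ht : 0 < t) {s : Multiset α × ℕ}
    (hs : s.1.card + s.2 + 2 = Fintype.card α) :
    (M.indepHessian t s).IsLorentzianAt (evalPoint α t) := by
  classical
  set H := M.indepHessian t s with hH
  have hsymm : H.IsSymm := indepHessian_isSymm s
  have hsym : ∀ i j, H i j = H j i := fun i j => hsymm.apply j i
  rcases eq_or_ne (H none none) 0 with h0 | h0
  · have hzero : ∀ i j, H i j = 0 := fun i j =>
      indepHessian_eq_zero_of_none ht hs.le
        ((hsym i none).trans (indepHessian_eq_zero_of_none ht hs.le h0 i)) j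
    intro w
    simp [dotProduct, mulVec, hzero]
  obtain ⟨m, a⟩ := s
  simp only at hs
  have h00 : H none none =
      if m.Nodup ∧ M.Indep {x | x ∈ m} then ((a + 2).factorial : ℝ) else 0 := by
    simp only [hH, indepHessian, of_apply, derivIndex, Prod.mk_add_mk, add_zero, add_assoc]
    exact indepDeriv_of_card_add_eq (by lia)
  have hm : m.Nodup ∧ M.Indep {x | x ∈ m} := by
    by_contra h
    exact h0 (by rw [h00, if_neg h])
  rw [if_pos hm] at h00
  obtain ⟨hnd, hS⟩ := hm
  set S : Set α := {x | x ∈ m} with hSdef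
  obtain ⟨ℓ, hℓ⟩ : ∃ ℓ : α → Prop, ∀ x, ℓ x ↔ x ∉ S ∧ M.Indep (insert x S) :=
    ⟨_, fun _ => Iff.rfl⟩
  have hx0 : ∀ x, H (some x) none = if ℓ x then ((a + 1).factorial : ℝ) else 0 := by
    intro x
    simp only [hH, indepHessian, of_apply, derivIndex, Prod.mk_add_mk, add_zero,
      add_comm m, Multiset.singleton_add]
    rw [indepDeriv_of_card_add_eq (by rw [Multiset.card_cons]; lia)]
    refine if_congr ?_ rfl rfl
    rw [Multiset.nodup_cons]
    have : {y | y ∈ x ::ₘ m} = insert x S := by ext y; simp [hSdef]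
    rw [this]
    simp [hℓ, hnd, hSdef]
  set φ : α → Set α := fun x => M.closure (insert x S) with hφ
  have hxz : ∀ x z, H (some x) (some z) =
      if ℓ x ∧ ℓ z ∧ φ x ≠ φ z then (a.factorial : ℝ) else 0 := by
    intro x z
    have e : m + {x} + {z} = z ::ₘ x ::ₘ m := by
      rw [add_comm, Multiset.singleton_add, add_comm, Multiset.singleton_add]
    simp only [hH, indepHessian, of_apply, derivIndex, Prod.mk_add_mk, add_zero]
    rw [e, indepDeriv_of_card_add_eq (by simp only [Multiset.card_cons]; lia)]
    refine if_congr ?_ rfl rfl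
    have : {y | y ∈ z ::ₘ x ::ₘ m} = insert z (insert x S) := by ext y; simp [hSdef]
    rw [this, Multiset.nodup_cons, Multiset.nodup_cons, Multiset.mem_cons, hℓ, hℓ]
    constructor
    · rintro ⟨⟨h1, h2, -⟩, h3⟩
      push Not at h1
      have hx : M.Indep (insert x S) := h3.subset (Set.subset_insert _ _)
      have hz : M.Indep (insert z S) := h3.subset (Set.insert_subset_insert (Set.subset_insert _ _))
      exact ⟨⟨h2, hx⟩, ⟨h1.2, hz⟩,
        (insert_insert_indep_iff_closure_ne hS hx hz h1.2).1 ⟨h1.1.symm, h3⟩⟩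
    · rintro ⟨⟨hx, hxi⟩, ⟨hz, hzi⟩, hne⟩
      obtain ⟨h1, h2⟩ := (insert_insert_indep_iff_closure_ne hS hxi hzi hz).2 hne
      exact ⟨⟨by rintro (h | h); exacts [h1 h.symm, hz h], hx, hnd⟩, h2⟩
  have hpos : 0 < H none none := by rw [h00]; positivity
  refine IsLorentzianAt.of_pos (e := Pi.single none 1) hsymm (fun w => ?_) ?_ ?_
  · have e1 : ∀ w, w ⬝ᵥ H *ᵥ Pi.single none 1 = ∑ i, w i * H i none := by
      intro w
      simp [dotProduct]
    set L : Finset α := Finset.univ.filter ℓ with hL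
    set σ : ℝ := ∑ x ∈ L, w (some x) with hσ
    set R : ℝ := ∑ x ∈ L, ∑ z ∈ L, if φ x = φ z then w (some x) * w (some z) else 0 with hR
    have hcard : (L.card : ℝ) ≤ a + 2 := by
      have : L.card + m.card ≤ Fintype.card α := by
        have hdisj : Disjoint L ⟨m, hnd⟩ := by
          rw [Finset.disjoint_left]
          intro x hx hxm
          exact ((hℓ x).1 (Finset.mem_filter.1 hx).2).1 hxm
        exact (Finset.card_union_of_disjoint hdisj).symm.trans_le (Finset.card_le_univ _)
      have : L.card ≤ a + 2 := by lia
      exact_mod_cast this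
    have hR_nn : σ ^ 2 ≤ (a + 2) * R := by
      have h1 := sq_sum_le_card_mul_sum_fiber_mul L φ fun x => w (some x)
      have h2 : 0 ≤ R := by
        by_contra! h
        rcases L.card.eq_zero_or_pos with h3 | h3
        · simp [hR, Finset.card_eq_zero.1 h3] at h
        · have : (0 : ℝ) < L.card := by exact_mod_cast h3
          nlinarith [sq_nonneg σ]
      exact h1.trans (mul_le_mul_of_nonneg_right hcard h2)
    have e2 : ∑ x, w (some x) * H (some x) none = (a + 1).factorial * σ := by
      simp only [hx0, hσ, hL, Finset.sum_filter, Finset.mul_sum]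
      refine Finset.sum_congr rfl fun x _ => ?_
      split_ifs <;> ring
    have e3 : ∑ x, ∑ z, w (some x) * H (some x) (some z) * w (some z) =
        a.factorial * (σ ^ 2 - R) := by
      have hσ2 : σ ^ 2 = ∑ x ∈ L, ∑ z ∈ L, w (some x) * w (some z) := by
        rw [sq, hσ, Finset.sum_mul_sum]
      rw [hσ2, hR, ← Finset.sum_sub_distrib, Finset.mul_sum, hL, Finset.sum_filter]
      refine Finset.sum_congr rfl fun x _ => ?_
      by_cases hx : ℓ x
      · rw [if_pos hx, ← Finset.sum_sub_distrib, Finset.mul_sum, Finset.sum_filter]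
        refine Finset.sum_congr rfl fun z _ => ?_
        rw [hxz]
        by_cases hz : ℓ z <;> by_cases hc : φ x = φ z <;> simp [hx, hz, hc]
        ring
      · simp [hxz, hx]
    have e4 : w ⬝ᵥ H *ᵥ w = (a + 2).factorial * w none ^ 2 +
        2 * w none * ((a + 1).factorial * σ) + a.factorial * (σ ^ 2 - R) := by
      rw [← e3, ← e2, ← h00]
      simp only [dotProduct, mulVec, Fintype.sum_option, mul_add, Finset.sum_add_distrib,
        Finset.mul_sum, hsym none (some _)]
      have : ∑ x, w (some x) * (H (some x) none * w none) =
          ∑ x, w none * (H (some x) none * w (some x)) :=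
        Finset.sum_congr rfl fun x _ => by ring
      rw [this]
      have : ∑ x, 2 * w none * (w (some x) * H (some x) none) =
          2 * ∑ x, w none * (H (some x) none * w (some x)) := by
        rw [Finset.mul_sum]
        exact Finset.sum_congr rfl fun x _ => by ring
      rw [this]
      simp only [mul_assoc]
      ring
    rw [e1, e1, e4, Fintype.sum_option, Fintype.sum_option, e2, h00]
    simp only [Pi.single_eq_same, one_mul, ne_eq, reduceCtorEq, not_false_eq_true,
      Pi.single_eq_of_ne, zero_mul, Finset.sum_const_zero, add_zero]
    have f1 : ((a + 1).factorial : ℝ) = (a + 1) * a.factorial := by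
      rw [Nat.factorial_succ]; push_cast; ring
    have f2 : ((a + 2).factorial : ℝ) = (a + 2) * ((a + 1) * a.factorial) := by
      rw [Nat.factorial_succ, Nat.cast_mul, f1]; push_cast; ring
    rw [f1, f2]
    have h1 : 0 ≤ ((a : ℝ) + 1) * (a.factorial : ℝ) ^ 2 := by positivity
    nlinarith [mul_le_mul_of_nonneg_left hR_nn h1]
  · simpa [dotProduct] using hpos
  · refine Finset.sum_nonneg fun i _ => mul_nonneg ?_ (Finset.sum_nonneg fun j _ => mul_nonneg
      (indepDeriv_nonneg ht.le _) ?_)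
    · cases i <;> simp [evalPoint, ht.le]
    · cases j <;> simp [evalPoint, ht.le]

theorem indepHessian_isLorentzianAt (ht : 0 < t) {d : ℕ} {s : Multiset α × ℕ}
    (hs : s.1.card + s.2 + (d + 2) = Fintype.card α) :
    (M.indepHessian t s).IsLorentzianAt (evalPoint α t) := by
  classical
  induction d generalizing s with
  | zero => exact indepHessian_isLorentzianAt_of_card ht hs
  | succ d ih =>
    have hcast : (Fintype.card α : ℝ) = s.1.card + s.2 + (d + 1 + 2) := by exact_mod_cast hs.symm
    have hsize : ∀ i, ((s + derivIndex i).1.card : ℝ) + (s + derivIndex i).2 =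
        s.1.card + s.2 + 1 := fun i => by exact_mod_cast card_add_derivIndex s i
    have hTv : ∀ i j, (M.indepHessian t (s + derivIndex i)).mulVec (evalPoint α t) j =
        ((d : ℝ) + 1) * M.indepHessian t s i j := by
      intro i j
      rw [indepHessian_mulVec_evalPoint, hcast]
      simp only [indepHessian, Matrix.of_apply]
      congr 1
      linarith [hsize i]
    refine Matrix.isLorentzianAt_of_slices (indepHessian_isSymm s)
      (fun i j => indepDeriv_nonneg ht.le _) ?_ (by positivity : (0 : ℝ) < d + 1)
      (T := fun i => M.indepHessian t (s + derivIndex i))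
      (fun i j k => indepDeriv_nonneg ht.le _) (fun i => ih ?_) hTv ?_ none
      fun i hi j => indepHessian_eq_zero_of_none ht (by lia) hi j
    · rintro (_ | i) <;> simp [evalPoint, ht]
    · have := card_add_derivIndex s i
      lia
    · intro j k
      rw [← hTv j k]
      refine Finset.sum_congr rfl fun i _ => ?_
      simp only [indepHessian, Matrix.of_apply, mul_comm]
      rw [add_right_comm s, add_right_comm (s + derivIndex j)]

theorem indepDeriv_mul_le_sq (ht : 0 < t) {a d : ℕ} (h : a + (d + 2) = Fintype.card α) :
    (d + 2 : ℝ) * (M.indepDeriv t (0, a) * M.indepDeriv t (0, a + 2)) ≤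
      (d + 1 : ℝ) * M.indepDeriv t (0, a + 1) ^ 2 := by
  classical
  have hL := indepHessian_isLorentzianAt (M := M) ht (s := (0, a)) (d := d) (by simpa using h)
    (Pi.single none 1)
  have hcast : (Fintype.card α : ℝ) = a + (d + 2) := by exact_mod_cast h.symm
  have hv : (M.indepHessian t (0, a)).mulVec (evalPoint α t) =
      fun i => ((d : ℝ) + 1) * M.indepDeriv t ((0, a) + derivIndex i) := by
    ext i
    rw [indepHessian_mulVec_evalPoint, hcast]
    simp only [Multiset.card_zero, Nat.cast_zero]
    ring
  have hvv : dotProduct (evalPoint α t) (fun i => ((d : ℝ) + 1) *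
      M.indepDeriv t ((0, a) + derivIndex i)) =
      ((d : ℝ) + 1) * ((d + 2) * M.indepDeriv t (0, a)) := by
    have := sum_indepDeriv_add_derivIndex (M := M) (t := t) (0, a)
    rw [hcast] at this
    simp only [Multiset.card_zero, Nat.cast_zero] at this
    rw [show (d + 2 : ℝ) = a + (d + 2) - 0 - a by ring, ← this, Finset.mul_sum]
    exact Finset.sum_congr rfl fun i _ => by ring
  rw [hv, hvv] at hL
  simp only [single_dotProduct, one_mul, Matrix.mulVec_single_one, Matrix.col_apply, indepHessian,
    Matrix.of_apply, derivIndex, Prod.mk_add_mk, add_zero, add_assoc] at hL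
  have hd : (0 : ℝ) < d + 1 := by positivity
  refine le_of_mul_le_mul_left ?_ hd
  have : 1 + 1 = 2 := rfl
  rw [this] at hL
  linarith

theorem continuous_indepDeriv (s : Multiset α × ℕ) : Continuous fun t => M.indepDeriv t s := by
  unfold indepDeriv
  fun_prop

theorem indepDeriv_zero {a k : ℕ} (h : a + k = Fintype.card α) :
    M.indepDeriv 0 (0, a) =
      a.factorial * Nat.card {A : Finset α // A.card = k ∧ M.Indep ↑A} := by
  classical
  rw [Nat.card_eq_fintype_card, Fintype.card_subtype, mul_comm, ← nsmul_eq_mul, ← Finset.sum_const]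
  symm
  refine Finset.sum_subset_zero_on_sdiff ?_ ?_ ?_
  · intro A hA
    simp only [Finset.mem_filter, Finset.mem_univ, true_and] at hA
    exact mem_indepAbove.2 ⟨hA.2, Multiset.zero_le _⟩
  · intro A hA
    simp only [Finset.mem_sdiff, mem_indepAbove, Finset.mem_filter, Finset.mem_univ,
      true_and] at hA
    have hne : A.card ≠ k := fun hk => hA.2 ⟨hk, hA.1.1⟩
    have hAn := Finset.card_le_univ A
    rcases lt_or_ge (Fintype.card α - A.card) a with h1 | h1
    · simp [Nat.descFactorial_eq_zero_iff_lt.2 h1]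
    · rw [zero_pow (by lia), mul_zero]
  · intro A hA
    simp only [Finset.mem_filter, Finset.mem_univ, true_and] at hA
    rw [show Fintype.card α - A.card = a by lia]
    simp [Nat.descFactorial_self]

end Matroid

theorem stmt17 {n : ℕ} (M : Matroid (Fin n)) (hE : M.E = Set.univ)
    (k : ℕ) (hk : 1 ≤ k) :
    ((numIndep M (k + 1) : ℝ) / (n.choose (k + 1) : ℝ)) *
        ((numIndep M (k - 1) : ℝ) / (n.choose (k - 1) : ℝ)) ≤
      ((numIndep M k : ℝ) / (n.choose k : ℝ)) ^ 2 := by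
  obtain ⟨d, rfl⟩ : ∃ d, k = d + 1 := ⟨k - 1, by lia⟩
  rcases lt_or_ge n (d + 2) with hn | hn
  · rw [Nat.choose_eq_zero_of_lt hn, Nat.cast_zero, div_zero, zero_mul]
    positivity
  obtain ⟨a, rfl⟩ : ∃ a, n = a + (d + 2) := ⟨n - (d + 2), by lia⟩
  have hlim : (d + 2 : ℝ) * (M.indepDeriv 0 (0, a) * M.indepDeriv 0 (0, a + 2)) ≤
      (d + 1 : ℝ) * M.indepDeriv 0 (0, a + 1) ^ 2 := by
    have hc := M.continuous_indepDeriv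
    refine ContinuousWithinAt.closure_le (s := Set.Ioi (0 : ℝ)) (by simp)
      (f := fun t => (d + 2 : ℝ) * (M.indepDeriv t (0, a) * M.indepDeriv t (0, a + 2)))
      (g := fun t => (d + 1 : ℝ) * M.indepDeriv t (0, a + 1) ^ 2)
      (by fun_prop) (by fun_prop)
      fun t ht => Matroid.indepDeriv_mul_le_sq ht (by simp)
  rw [Matroid.indepDeriv_zero (k := d + 2) (by simp),
    Matroid.indepDeriv_zero (k := d) (by simp; lia),
    Matroid.indepDeriv_zero (k := d + 1) (by simp; lia)] at hlim
  change (d + 2 : ℝ) * ((a.factorial * (numIndep M (d + 2) : ℝ)) *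
    ((a + 2).factorial * (numIndep M d : ℝ))) ≤
    (d + 1 : ℝ) * ((a + 1).factorial * (numIndep M (d + 1) : ℝ)) ^ 2 at hlim
  simp only [Nat.add_sub_cancel, add_assoc, Nat.reduceAdd]
  set x : ℝ := (numIndep M (d + 2) : ℝ)
  set y : ℝ := (numIndep M d : ℝ)
  set z : ℝ := (numIndep M (d + 1) : ℝ)
  set N : ℕ := a + (d + 2) with hN
  have c1 : (N.choose (d + 1) : ℝ) * (d + 1) = N.choose d * (a + 2) := by
    have := Nat.choose_succ_right_eq N d
    rw [show N - d = a + 2 by lia] at this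
    exact_mod_cast this
  have c2 : (N.choose (d + 2) : ℝ) * (d + 2) = N.choose (d + 1) * (a + 1) := by
    have := Nat.choose_succ_right_eq N (d + 1)
    rw [show N - (d + 1) = a + 1 by lia] at this
    exact_mod_cast this
  have p0 : (0 : ℝ) < N.choose d := by exact_mod_cast Nat.choose_pos (by lia)
  have p1 : (0 : ℝ) < N.choose (d + 1) := by exact_mod_cast Nat.choose_pos (by lia)
  have f1 : ((a + 1).factorial : ℝ) = (a + 1) * a.factorial := by
    rw [Nat.factorial_succ]; push_cast; ring
  have f2 : ((a + 2).factorial : ℝ) = (a + 2) * ((a + 1) * a.factorial) := by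
    rw [Nat.factorial_succ, Nat.cast_mul, f1]; push_cast; ring
  rw [f1, f2] at hlim
  have hlim' : (d + 2 : ℝ) * (a + 2) * (x * y) ≤ (d + 1) * (a + 1) * z ^ 2 := by
    have hp : (0 : ℝ) < (a + 1) * (a.factorial : ℝ) ^ 2 := by positivity
    refine le_of_mul_le_mul_left ?_ hp
    linarith
  have hC2 : (N.choose (d + 2) : ℝ) = N.choose (d + 1) * (a + 1) / (d + 2) := by
    rw [← c2]; field_simp
  have hC0 : (N.choose d : ℝ) = N.choose (d + 1) * (d + 1) / (a + 2) := by
    rw [c1]; field_simp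
  rw [hC2, hC0]
  set C : ℝ := (N.choose (d + 1) : ℝ)
  rw [div_mul_div_comm, div_pow, div_le_div_iff₀ (by positivity) (by positivity)]
  have : z ^ 2 * (C * (a + 1) / (d + 2) * (C * (d + 1) / (a + 2))) =
      C ^ 2 / ((d + 2) * (a + 2)) * ((d + 1) * (a + 1) * z ^ 2) := by
    field_simp
  rw [this]
  have h2 : x * y * C ^ 2 = C ^ 2 / ((d + 2) * (a + 2)) * ((d + 2 : ℝ) * (a + 2) * (x * y)) := by
    field_simp
  rw [h2]
  exact mul_le_mul_of_nonneg_left hlim' (by positivity)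
end
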